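/- arXiv:2605.21438 — 3 statements merged into one kernel-verified Lean document; each statement's English description precedes it below -/
import Mathlib

section
/- Let d ≥ 1 be an integer and a₀ > 0. Let X = (X_k)_{k≥0} be a symmetric random walk on ℝ^d started at 0, let M ≥ 1, and assume P[X_1 ∉ B_M(0)] ≥ a₀. Then there exists C > 0 depending only on (a₀, d) such that for every integer n ≥ 1, sup_{y ∈ ℝ^d} P[X_n ∈ B_M(y)] ≤ C/n^{d/2}. -/
open scoped ENNReal
open MeasureTheory

noncomputable section

namespace BlackboxRW

/-- Supremum norm of a lattice point. -/
def supNorm {d : ℕ} (x : Fin d → ℤ) : ℝ :=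
  ((Finset.univ.sup fun i => (x i).natAbs : ℕ) : ℝ)

/-- Supremum norm of a point of `ℝ^d`. -/
def supNormR {d : ℕ} (y : Fin d → ℝ) : ℝ :=
  if h : (Finset.univ : Finset (Fin d)).Nonempty then Finset.univ.sup' h fun i => |y i|
  else 0

/-- First coordinate (dot product with `e₁`). -/
def e1 {d : ℕ} (y : Fin d → ℝ) : ℝ := if h : 0 < d then y ⟨0, h⟩ else 0

/-- The box `B_r(c) = c + [-r,r]^d ⊆ ℝ^d`. -/
def box {d : ℕ} (r : ℝ) (c : Fin d → ℝ) : Set (Fin d → ℝ) := {y | ∀ i, |y i - c i| ≤ r}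

/-- Invariance of a measure on `ℝ^d` under coordinate permutations and sign flips. -/
def IsSymmMeasure {d : ℕ} (μ : Measure (Fin d → ℝ)) : Prop :=
  ∀ (π : Equiv.Perm (Fin d)) (e : Fin d → Bool),
    μ.map (fun x i => (if e i then (-1:ℝ) else 1) * x (π i)) = μ

/-- Law of the position after `n` i.i.d. steps of law `μ`, for the walk started at `0`. -/
def stepIter {d : ℕ} (μ : Measure (Fin d → ℝ)) : ℕ → Measure (Fin d → ℝ)
  | 0 => Measure.dirac 0
  | n + 1 => ((stepIter μ n).prod μ).map fun p => p.1 + p.2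

/-- The standard deviation `σ` of one step: `σ² = E[|X₁|₂²]`. -/
def walkSigma {d : ℕ} (μ : Measure (Fin d → ℝ)) : ℝ :=
  Real.sqrt (∫ x, (∑ i, x i ^ 2) ∂μ)

/-- A symmetric random walk on `ℝ^d` (started at `0`, i.i.d. steps). -/
structure SymmRW (d : ℕ) where
  μ : Measure (Fin d → ℝ)
  prob : IsProbabilityMeasure μ
  symm : IsSymmMeasure μ

/-- A `(c_M, C_M)`-regular random walk on `ℝ^d`. -/
structure RegularRW (d : ℕ) (cM CM : ℝ) where
  μ : Measure (Fin d → ℝ)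
  prob : IsProbabilityMeasure μ
  symm : IsSymmMeasure μ
  var_integrable : Integrable (fun x => ∑ i, x i ^ 2) μ
  mgf_le : ∫⁻ x, ENNReal.ofReal (Real.exp (cM / walkSigma μ * e1 x)) ∂μ ≤
    ENNReal.ofReal CM

/-- The Green function `𝔾_λ(A) = ∑_{m ≥ 0} λ^m P[X_m ∈ A]`. -/
def green {d : ℕ} (μ : Measure (Fin d → ℝ)) (lam : ℝ) (A : Set (Fin d → ℝ)) : ℝ≥0∞ :=
  ∑' m : ℕ, ENNReal.ofReal (lam ^ m) * stepIter μ m A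

end BlackboxRW
open BlackboxRW

/-!
Symmetry makes the law of the steps invariant under an independent random sign in each coordinate
of each step, so one may fix the absolute values of all coordinates and average over the signs
alone. If `m` of the numbers `a₁, …, aₙ` exceed `M` in absolute value, then by Erdős's argument
for the Littlewood–Offord problem the signed sum `±a₁ ± ⋯ ± aₙ` falls in a given interval of
length `2 * M` with probability at most `choose m (m / 2) / 2 ^ m ≤ 1 / √(m + 1)`: the sets of
indices carrying a positive summand form an antichain, and Sperner's theorem applies. Given the
absolute values, the `d` coordinates are independent, which turns this into a `d`-th power.

By symmetry and a union bound, each coordinate of a step exceeds `M` with probability at least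
`q = a₀ / d`. By Hoeffding's inequality every coordinate therefore has at least `q n / 2` such
steps, except with probability at most `d * exp (-q² n / 2)`, which is negligible compared with
`n ^ (-d / 2)`.
-/

open ProbabilityTheory
open scoped Finset

section MiddleBinomial

lemma centralBinom_sq_mul_le (k : ℕ) : k.centralBinom ^ 2 * (2 * k + 1) ≤ 16 ^ k := by
  induction k with
  | zero => simp
  | succ k ih =>
    refine Nat.le_of_mul_le_mul_left (c := (k + 1) ^ 2) ?_ (by positivity)
    calc (k + 1) ^ 2 * ((k + 1).centralBinom ^ 2 * (2 * (k + 1) + 1))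
        = ((k + 1) * (k + 1).centralBinom) ^ 2 * (2 * k + 3) := by ring
      _ = 4 * (2 * k + 1) * (2 * k + 3) * (k.centralBinom ^ 2 * (2 * k + 1)) := by
          rw [Nat.succ_mul_centralBinom_succ]; ring
      _ ≤ 16 * (k + 1) ^ 2 * 16 ^ k := Nat.mul_le_mul (by nlinarith) ih
      _ = (k + 1) ^ 2 * 16 ^ (k + 1) := by ring

lemma two_mul_choose_eq_centralBinom_succ (k : ℕ) :
    2 * (2 * k + 1).choose k = (k + 1).centralBinom := by
  rw [Nat.centralBinom_eq_two_mul_choose, Nat.mul_succ, Nat.choose_succ_succ,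
    Nat.choose_symm_half, two_mul]

lemma choose_half_sq_mul_succ_le (m : ℕ) : m.choose (m / 2) ^ 2 * (m + 1) ≤ 4 ^ m := by
  obtain ⟨k, rfl | rfl⟩ := Nat.even_or_odd' m
  · rw [Nat.mul_div_cancel_left k two_pos, ← Nat.centralBinom_eq_two_mul_choose, pow_mul]
    exact centralBinom_sq_mul_le k
  · have hdiv : (2 * k + 1) / 2 = k := by omega
    have hpow : (16 : ℕ) ^ (k + 1) = 4 * 4 ^ (2 * k + 1) := by
      rw [← pow_succ', add_assoc, ← Nat.mul_succ, pow_mul]; norm_num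
    have hcentral := centralBinom_sq_mul_le (k + 1)
    rw [← two_mul_choose_eq_centralBinom_succ, hpow] at hcentral
    rw [hdiv]
    nlinarith [sq_nonneg ((2 * k + 1).choose k)]

lemma choose_half_le_two_pow_div_sqrt (m : ℕ) :
    (m.choose (m / 2) : ℝ) ≤ 2 ^ m / √(m + 1) := by
  have hsq : (m.choose (m / 2) : ℝ) ^ 2 * (m + 1) ≤ (2 ^ m) ^ 2 := by
    rw [← pow_mul, mul_comm m, pow_mul]
    exact_mod_cast choose_half_sq_mul_succ_le m
  rw [le_div_iff₀ (by positivity), ← sq_le_sq₀ (by positivity) (by positivity), mul_pow,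
    Real.sq_sqrt (by positivity)]
  exact hsq

end MiddleBinomial

section LittlewoodOfford

lemma isAntichain_sum_mem_Icc {κ α : Type*} [AddCommGroup α] [LinearOrder α]
    [IsOrderedAddMonoid α] {a : κ → α} {L : α} (ha : ∀ k, 0 ≤ a k) (hL : ∀ k, L < a k) (c : α) :
    IsAntichain (· ⊆ ·) {T : Finset κ | ∑ k ∈ T, a k ∈ Set.Icc c (c + L)} := by
  classical
  intro T hT T' hT' hne hsub
  obtain ⟨k, hkT', hkT⟩ := Finset.exists_of_ssubset (hsub.ssubset_of_ne hne)
  have hinsert : a k + ∑ j ∈ T, a j ≤ ∑ j ∈ T', a j := by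
    rw [← Finset.sum_insert hkT]
    exact Finset.sum_le_sum_of_subset_of_nonneg (Finset.insert_subset hkT' hsub)
      fun j _ _ ↦ ha j
  have hgap : c + L < a k + ∑ j ∈ T, a j := by
    rw [add_comm]; exact add_lt_add_of_lt_of_le (hL k) hT.1
  exact (hgap.trans_le hinsert).not_ge hT'.2

variable {κ : Type*} [Fintype κ]

lemma sum_units_smul_eq (ε : κ → ℤˣ) (a : κ → ℝ) :
    ∑ k, ε k • a k = 2 * ∑ k with 0 ≤ ε k • a k, |a k| - ∑ k, |a k| := by
  rw [Finset.sum_filter, Finset.mul_sum, ← Finset.sum_sub_distrib]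
  refine Finset.sum_congr rfl fun k _ ↦ ?_
  have habs : |a k| = |ε k • a k| := by
    obtain h | h := Int.units_eq_one_or (ε k) <;> simp [h]
  rw [habs]
  split_ifs with h
  · rw [abs_of_nonneg h]; ring
  · rw [abs_of_neg (not_le.mp h)]; ring

lemma injective_filter_nonneg_units_smul {a : κ → ℝ} (ha : ∀ k, a k ≠ 0) :
    Function.Injective fun ε : κ → ℤˣ ↦ ({k | 0 ≤ ε k • a k} : Finset κ) := by
  intro ε ε' h
  funext k
  have hk : 0 ≤ ε k • a k ↔ 0 ≤ ε' k • a k := by simpa using Finset.ext_iff.mp h k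
  obtain hε | hε := Int.units_eq_one_or (ε k) <;>
  obtain hε' | hε' := Int.units_eq_one_or (ε' k) <;>
  obtain hneg | hpos := (ha k).lt_or_gt <;>
  simp_all [not_le_of_gt, le_of_lt]

variable [DecidableEq κ]

lemma card_abs_sum_units_smul_sub_le_le_choose {a : κ → ℝ} {M : ℝ} (ha : ∀ k, M < |a k|) (y : ℝ) :
    #{ε : κ → ℤˣ | |∑ k, ε k • a k - y| ≤ M} ≤
      (Fintype.card κ).choose (Fintype.card κ / 2) := by
  obtain hM | hM := lt_or_ge M 0
  · simp [(hM.trans_le (abs_nonneg _)).not_ge]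
  set S : Finset (κ → ℤˣ) := {ε | |∑ k, ε k • a k - y| ≤ M} with hS
  let nonnegSet (ε : κ → ℤˣ) : Finset κ := {k | 0 ≤ ε k • a k}
  have hinj : Function.Injective nonnegSet :=
    injective_filter_nonneg_units_smul fun k ↦ abs_pos.mp (hM.trans_lt (ha k))
  have hantichain : IsAntichain (· ⊆ ·) (S.image nonnegSet : Set (Finset κ)) := by
    refine (isAntichain_sum_mem_Icc (fun k ↦ abs_nonneg (a k)) ha
      ((y + ∑ k, |a k| - M) / 2)).subset ?_
    simp only [Finset.coe_image, Set.image_subset_iff]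
    intro ε hε
    simp only [hS, Finset.coe_filter, Finset.mem_univ, true_and, Set.mem_ofPred_eq,
      sum_units_smul_eq, abs_le] at hε
    constructor <;> simp only [nonnegSet] <;> linarith
  rw [← Finset.card_image_of_injective S hinj]
  exact hantichain.sperner

lemma card_abs_sum_units_smul_sub_le_le {a : κ → ℝ} {M : ℝ} {s : Finset κ}
    (hs : ∀ k ∈ s, M < |a k|) (y : ℝ) :
    #{ε : κ → ℤˣ | |∑ k, ε k • a k - y| ≤ M} ≤ (#s).choose (#s / 2) * 2 ^ #sᶜ := by
  let restrictCompl (ε : κ → ℤˣ) (k : (sᶜ : Finset κ)) : ℤˣ := ε k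
  have hcard : #(Finset.univ : Finset ((sᶜ : Finset κ) → ℤˣ)) = 2 ^ #sᶜ := by
    rw [Finset.card_univ, Fintype.card_fun, Fintype.card_coe]; rfl
  rw [← hcard]
  refine Finset.card_le_mul_card_image_of_maps_to (f := restrictCompl)
    (fun _ _ ↦ Finset.mem_univ _) _ fun η _ ↦ ?_
  have hsub := card_abs_sum_units_smul_sub_le_le_choose (a := fun k : s ↦ a k)
    (fun k ↦ hs k k.2) (y - ∑ k, η k • a k)
  rw [Fintype.card_coe] at hsub
  refine (Finset.card_le_card_of_injOn (fun ε (k : s) ↦ ε k) ?_ ?_).trans hsub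
  · intro ε hε
    simp only [Finset.coe_filter, Finset.mem_filter, Finset.mem_univ, true_and,
      Set.mem_ofPred_eq] at hε ⊢
    obtain ⟨hnear, rfl⟩ := hε
    rwa [← Finset.sum_add_sum_compl s, ← Finset.sum_coe_sort s, ← Finset.sum_coe_sort sᶜ,
      ← sub_sub_eq_add_sub] at hnear
  · intro ε hε ε' hε' h
    simp only [Finset.coe_filter, Finset.mem_filter, Finset.mem_univ, true_and,
      Set.mem_ofPred_eq] at hε hε'
    funext k
    by_cases hk : k ∈ s
    · exact congrFun h ⟨k, hk⟩
    · exact congrFun (hε.2.trans hε'.2.symm) ⟨k, Finset.mem_compl.mpr hk⟩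

lemma card_abs_sum_units_smul_sub_le_le_div_sqrt (a : κ → ℝ) (M y : ℝ) :
    (#{ε : κ → ℤˣ | |∑ k, ε k • a k - y| ≤ M} : ℝ) ≤
      2 ^ Fintype.card κ / √(#{k | M < |a k|} + 1) := by
  set s : Finset κ := {k | M < |a k|} with hs
  calc (#{ε : κ → ℤˣ | |∑ k, ε k • a k - y| ≤ M} : ℝ)
      ≤ (#s).choose (#s / 2) * 2 ^ #sᶜ := by
        exact_mod_cast card_abs_sum_units_smul_sub_le_le (by simp [hs]) y
    _ ≤ 2 ^ #s / √(#s + 1) * 2 ^ #sᶜ := by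
        gcongr; exact choose_half_le_two_pow_div_sqrt _
    _ = 2 ^ Fintype.card κ / √(#s + 1) := by
        rw [div_mul_eq_mul_div, ← pow_add, Finset.card_add_card_compl]

end LittlewoodOfford

section Averaging

variable {G α : Type*} [Fintype G] [SMul G α] [MeasurableSpace α]
  [MeasurableConstSMul G α] {μ : Measure α} [SMulInvariantMeasure G α μ] {A : Set α}
  [DecidablePred (· ∈ A)]

lemma lintegral_card_smul_mem (hA : MeasurableSet A) :
    ∫⁻ x, #{g : G | g • x ∈ A} ∂μ = Fintype.card G * μ A := by
  have hcount (x : α) : (#{g : G | g • x ∈ A} : ℝ≥0∞) =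
      ∑ g : G, ((g • ·) ⁻¹' A).indicator 1 x := by
    classical
    simp [Set.indicator_apply, Finset.sum_boole]
  have hpre (g : G) : MeasurableSet ((g • ·) ⁻¹' A : Set α) := measurable_const_smul g hA
  rw [lintegral_congr hcount,
    lintegral_finsetSum _ fun g _ ↦ measurable_one.indicator (hpre g)]
  simp [lintegral_indicator_one (hpre _), SMulInvariantMeasure.measure_preimage_smul _ hA]

lemma measure_le_add_of_card_smul_mem_le [Nonempty G] [IsProbabilityMeasure μ]
    (hA : MeasurableSet A) {B : Set α} {c : ℝ≥0∞}
    (h : ∀ x ∉ B, (#{g : G | g • x ∈ A} : ℝ≥0∞) ≤ c * Fintype.card G) :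
    μ A ≤ c + μ B := by
  have hcard : (Fintype.card G : ℝ≥0∞) ≠ 0 := by simp
  have hpointwise (x : α) : (#{g : G | g • x ∈ A} : ℝ≥0∞) ≤
      c * Fintype.card G + B.indicator (fun _ ↦ (Fintype.card G : ℝ≥0∞)) x := by
    by_cases hx : x ∈ B
    · rw [Set.indicator_of_mem hx]
      exact le_add_left (mod_cast Finset.card_le_univ _)
    · exact le_add_right (h x hx)
  rw [← ENNReal.mul_le_mul_iff_right hcard (ENNReal.natCast_ne_top _)]
  calc Fintype.card G * μ A = ∫⁻ x, #{g : G | g • x ∈ A} ∂μ := (lintegral_card_smul_mem hA).symm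
    _ ≤ ∫⁻ x, c * Fintype.card G + B.indicator (fun _ ↦ (Fintype.card G : ℝ≥0∞)) x ∂μ :=
        lintegral_mono hpointwise
    _ ≤ c * Fintype.card G + Fintype.card G * μ B := by
        rw [lintegral_add_left measurable_const, lintegral_const, measure_univ, mul_one]
        gcongr
        exact lintegral_indicator_const_le B _
    _ = Fintype.card G * (c + μ B) := by ring

end Averaging

lemma smulInvariantMeasure_pi {κ : Type*} [Fintype κ] {G E : κ → Type*} [∀ k, SMul (G k) (E k)]
    [∀ k, MeasurableSpace (E k)] [∀ k, MeasurableConstSMul (G k) (E k)] (μ : ∀ k, Measure (E k))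
    [∀ k, SigmaFinite (μ k)] [∀ k, SMulInvariantMeasure (G k) (E k) (μ k)] :
    SMulInvariantMeasure (∀ k, G k) (∀ k, E k) (Measure.pi μ) where
  measure_preimage_smul g _ hs :=
    (measurePreserving_pi μ μ fun k ↦ measurePreserving_smul (g k) (μ k)).measure_preimage
      hs.nullMeasurableSet

lemma iIndepSet_pi_preimage_eval {κ : Type*} [Fintype κ] {E : κ → Type*}
    [∀ k, MeasurableSpace (E k)] (μ : ∀ k, Measure (E k)) [∀ k, IsProbabilityMeasure (μ k)]
    {s : ∀ k, Set (E k)} (hs : ∀ k, MeasurableSet (s k)) :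
    iIndepSet (fun k ↦ Function.eval k ⁻¹' s k) (Measure.pi μ) := by
  have hindep : iIndepFun (fun k (x : ∀ k, E k) ↦ x k) (Measure.pi μ) :=
    iIndepFun_pi (X := fun _ ↦ id) fun _ ↦ aemeasurable_id
  exact (iIndepSet_iff_meas_biInter fun k ↦ measurable_pi_apply k (hs k)).mpr
    fun S ↦ hindep.measure_inter_preimage_eq_mul S fun k _ ↦ hs k

lemma measureReal_card_mem_le_le_exp {Ω κ : Type*} [MeasurableSpace Ω] [Fintype κ]
    {P : Measure Ω} [IsProbabilityMeasure P] {A : κ → Set Ω} [∀ k, DecidablePred (· ∈ A k)]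
    (hA : ∀ k, MeasurableSet (A k)) (hindep : iIndepSet A P) {q t : ℝ} (ht : 0 ≤ t)
    (hq : ∀ k, q ≤ P.real (A k)) :
    P.real {ω | (#{k | ω ∈ A k} : ℝ) ≤ (q - t) * Fintype.card κ} ≤
      Real.exp (-2 * t ^ 2 * Fintype.card κ) := by
  let X (k : κ) : Ω → ℝ := (A k).indicator fun _ ↦ 1
  have hX (k : κ) : Measurable (X k) := measurable_const.indicator (hA k)
  have hXmem (k : κ) (ω : Ω) : X k ω ∈ Set.Icc (0 : ℝ) 1 := by
    simp only [X, Set.indicator_apply]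
    split_ifs <;> simp
  have hmean (k : κ) : P[X k] = P.real (A k) := by
    simp [X, integral_indicator_const, hA k]
  have hsubG (k : κ) :
      HasSubgaussianMGF (fun ω ↦ P.real (A k) - X k ω) ((‖(1 : ℝ) - 0‖₊ / 2) ^ 2) P := by
    have hcentred := hasSubgaussianMGF_of_mem_Icc (μ := P) (hX k).aemeasurable
      (.of_forall (hXmem k))
    simpa only [hmean, Pi.neg_def, neg_sub] using hcentred.neg
  have hindepX : iIndepFun (fun k ω ↦ P.real (A k) - X k ω) P :=
    hindep.iIndepFun_indicator.comp (fun k (z : ℝ) ↦ P.real (A k) - z) fun k ↦ by fun_prop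
  have hoeffding := HasSubgaussianMGF.measure_sum_ge_le_of_iIndepFun hindepX
    (s := Finset.univ) (fun k _ ↦ hsubG k) (ε := t * Fintype.card κ) (by positivity)
  have hcount (ω : Ω) : ∑ k, X k ω = #{k | ω ∈ A k} := by
    simp [X, Set.indicator_apply, Finset.sum_boole]
  have hmeans : q * Fintype.card κ ≤ ∑ k, P.real (A k) := by
    simpa [mul_comm] using Finset.card_nsmul_le_sum Finset.univ _ q fun k _ ↦ hq k
  refine le_trans (measureReal_mono fun ω hω ↦ ?_) (hoeffding.trans_eq ?_)
  · simp only [Set.mem_ofPred_eq, Finset.sum_sub_distrib, hcount] at hω ⊢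
    linarith
  · obtain hκ | hκ := (Fintype.card κ).eq_zero_or_pos
    · simp [hκ]
    · congr 1
      simp only [sub_zero, nnnorm_one, one_div, inv_pow, Finset.sum_const, Finset.card_univ,
        nsmul_eq_mul, NNReal.coe_mul, NNReal.coe_natCast, NNReal.coe_inv, NNReal.coe_pow,
        NNReal.coe_ofNat]
      field_simp

section SignInvariantSteps

variable {κ ι : Type*} [Fintype κ]

lemma card_filter_forall_swap [Fintype ι] [DecidableEq κ] [DecidableEq ι] {G : Type*}
    [Fintype G] (p : ι → (κ → G) → Prop) [∀ i, DecidablePred (p i)] :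
    #{g : κ → ι → G | ∀ i, p i fun k ↦ g k i} = ∏ i, #{ε : κ → G | p i ε} := by
  rw [← Fintype.card_piFinset]
  exact Finset.card_equiv (Equiv.piComm _) (by simp [Equiv.piComm])

lemma card_units_smul_forall_abs_sum_sub_le [Fintype ι] [DecidableEq κ] [DecidableEq ι]
    {x : κ → ι → ℝ} {M : ι → ℝ} {r : ℝ} (hr : 0 < r)
    (hx : ∀ i, r ≤ #{k | M i < |x k i|}) (y : ι → ℝ) :
    (#{g : κ → ι → ℤˣ | ∀ i, |∑ k, (g • x) k i - y i| ≤ M i} : ℝ) ≤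
      (√r)⁻¹ ^ Fintype.card ι * Fintype.card (κ → ι → ℤˣ) := by
  have hcoord (i : ι) : (#{ε : κ → ℤˣ | |∑ k, ε k • x k i - y i| ≤ M i} : ℝ) ≤
      (√r)⁻¹ * 2 ^ Fintype.card κ := by
    rw [inv_mul_eq_div]
    refine (card_abs_sum_units_smul_sub_le_le_div_sqrt (fun k ↦ x k i) (M i) (y i)).trans ?_
    gcongr
    linarith [hx i]
  calc (#{g : κ → ι → ℤˣ | ∀ i, |∑ k, (g • x) k i - y i| ≤ M i} : ℝ)
      = ∏ i, (#{ε : κ → ℤˣ | |∑ k, ε k • x k i - y i| ≤ M i} : ℝ) := by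
        exact_mod_cast card_filter_forall_swap
          fun i (ε : κ → ℤˣ) ↦ |∑ k, ε k • x k i - y i| ≤ M i
    _ ≤ ∏ _i : ι, (√r)⁻¹ * 2 ^ Fintype.card κ :=
        Finset.prod_le_prod (fun _ _ ↦ by positivity) fun i _ ↦ hcoord i
    _ = (√r)⁻¹ ^ Fintype.card ι * Fintype.card (κ → ι → ℤˣ) := by
        simp [mul_pow, ← pow_mul, mul_comm]

variable (μ : κ → Measure (ι → ℝ)) [∀ k, IsProbabilityMeasure (μ k)]

lemma measure_pi_card_lt_abs_le_le_exp {q M : ℝ} (hq : 0 ≤ q) {i : ι}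
    (h : ∀ k, q ≤ (μ k).real {x | M < |x i|}) :
    Measure.pi μ {x | (#{k | M < |x k i|} : ℝ) ≤ q / 2 * Fintype.card κ} ≤
      ENNReal.ofReal (Real.exp (-(q ^ 2 / 2 * Fintype.card κ))) := by
  have hmeas : MeasurableSet {x : ι → ℝ | M < |x i|} :=
    measurableSet_lt measurable_const (by fun_prop)
  have hprob (k : κ) : q ≤ (Measure.pi μ).real (Function.eval k ⁻¹' {x | M < |x i|}) := by
    rw [(measurePreserving_eval μ k).measureReal_preimage hmeas.nullMeasurableSet]
    exact h k
  have hoeffding := measureReal_card_mem_le_le_exp (A := fun k ↦ {x : κ → ι → ℝ | M < |x k i|})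
    (fun k ↦ (measurable_pi_apply (X := fun _ ↦ ι → ℝ) k) hmeas)
    (iIndepSet_pi_preimage_eval μ fun _ ↦ hmeas) (by positivity) hprob (t := q / 2)
  rw [← ofReal_measureReal]
  refine ENNReal.ofReal_le_ofReal ?_
  convert hoeffding using 2
  · simp only [Set.mem_ofPred_eq, sub_half]
  · ring

theorem measure_pi_forall_abs_sum_sub_le_le [Fintype ι] [Nonempty κ]
    [∀ k, SMulInvariantMeasure (ι → ℤˣ) (ι → ℝ) (μ k)] {q : ℝ} (hq : 0 < q) {M : ι → ℝ}
    (h : ∀ k i, q ≤ (μ k).real {x | M i < |x i|}) (y : ι → ℝ) :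
    Measure.pi μ {x | ∀ i, |∑ k, x k i - y i| ≤ M i} ≤ ENNReal.ofReal
      ((√(q / 2 * Fintype.card κ))⁻¹ ^ Fintype.card ι +
        Fintype.card ι * Real.exp (-(q ^ 2 / 2 * Fintype.card κ))) := by
  classical
  set r : ℝ := q / 2 * Fintype.card κ
  have hr0 : 0 < r := by positivity
  let fewLargeSteps (i : ι) : Set (κ → ι → ℝ) := {x | (#{k | M i < |x k i|} : ℝ) ≤ r}
  have hmeas : MeasurableSet {x : κ → ι → ℝ | ∀ i, |∑ k, x k i - y i| ≤ M i} := by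
    simp only [Set.ofPred_forall]
    exact .iInter fun i ↦ measurableSet_le (by fun_prop) measurable_const
  have hcount (x) (hx : x ∉ ⋃ i, fewLargeSteps i) :
      (#{g : κ → ι → ℤˣ | ∀ i, |∑ k, (g • x) k i - y i| ≤ M i} : ℝ≥0∞) ≤
        ENNReal.ofReal ((√r)⁻¹ ^ Fintype.card ι) * Fintype.card (κ → ι → ℤˣ) := by
    simp only [fewLargeSteps, Set.mem_iUnion, Set.mem_ofPred_eq, not_exists, not_le] at hx
    have hreal := card_units_smul_forall_abs_sum_sub_le hr0 (fun i ↦ (hx i).le) y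
    rw [← ENNReal.ofReal_natCast, ← ENNReal.ofReal_natCast, ← ENNReal.ofReal_mul (by positivity)]
    exact ENNReal.ofReal_le_ofReal hreal
  have hfew : Measure.pi μ (⋃ i, fewLargeSteps i) ≤
      ENNReal.ofReal (Fintype.card ι * Real.exp (-(q ^ 2 / 2 * Fintype.card κ))) := by
    refine (measure_iUnion_fintype_le _ _).trans ((Finset.sum_le_sum fun i _ ↦
      measure_pi_card_lt_abs_le_le_exp μ hq.le fun k ↦ h k i).trans_eq ?_)
    simp [ENNReal.ofReal_mul]
  rw [ENNReal.ofReal_add (by positivity) (by positivity)]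
  have : SMulInvariantMeasure (κ → ι → ℤˣ) (κ → ι → ℝ) (Measure.pi μ) :=
    smulInvariantMeasure_pi (G := fun _ ↦ ι → ℤˣ) μ
  exact (measure_le_add_of_card_smul_mem_le hmeas hcount).trans (by gcongr)

end SignInvariantSteps

section Rate

lemma inv_sqrt_mul_pow {c x : ℝ} (hc : 0 ≤ c) (hx : 0 ≤ x) (d : ℕ) :
    (√(c * x))⁻¹ ^ d = (√c)⁻¹ ^ d / x ^ ((d : ℝ) / 2) := by
  rw [Real.sqrt_mul hc, mul_inv, mul_pow, Real.rpow_div_two_eq_sqrt _ hx, Real.rpow_natCast,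
    inv_pow (√x), div_eq_mul_inv]

lemma exp_neg_mul_le_div_rpow {c x : ℝ} (hc : 0 < c) (hx : 1 ≤ x) (d : ℕ) :
    Real.exp (-(c * x)) ≤ d.factorial / c ^ d / x ^ ((d : ℝ) / 2) := by
  have hpow : x ^ ((d : ℝ) / 2) ≤ x ^ d := by
    rw [← Real.rpow_natCast x d]
    exact Real.rpow_le_rpow_of_exponent_le hx (half_le_self d.cast_nonneg)
  calc Real.exp (-(c * x)) ≤ ((c * x) ^ d / d.factorial)⁻¹ := by
        rw [Real.exp_neg]
        gcongr
        exact Real.pow_div_factorial_le_exp _ (by positivity) d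
    _ = d.factorial / c ^ d / x ^ d := by rw [inv_div, mul_pow, div_div]
    _ ≤ d.factorial / c ^ d / x ^ ((d : ℝ) / 2) := by gcongr

end Rate

namespace BlackboxRW

variable {d : ℕ} {μ : Measure (Fin d → ℝ)}

lemma measurableSet_box (M : ℝ) (y : Fin d → ℝ) : MeasurableSet (box M y) := by
  simp only [box, Set.ofPred_forall]
  exact .iInter fun i ↦ measurableSet_le (by fun_prop) measurable_const

lemma stepIter_eq_map_sum (μ : Measure (Fin d → ℝ)) [IsProbabilityMeasure μ] (n : ℕ) :
    stepIter μ n = (Measure.pi fun _ : Fin n ↦ μ).map fun x ↦ ∑ k, x k := by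
  induction n with
  | zero => simp [stepIter]
  | succ n ih =>
    have hsum : Measurable fun x : Fin n → Fin d → ℝ ↦ ∑ k, x k := by fun_prop
    have hprod : (stepIter μ n).prod μ = (μ.prod (Measure.pi fun _ : Fin n ↦ μ)).map
        fun p ↦ (∑ k, p.2 k, p.1) := by
      rw [ih]
      nth_rw 2 [← Measure.map_id (μ := μ)]
      rw [Measure.map_prod_map _ _ hsum measurable_id, ← Measure.prod_swap,
        Measure.map_map (by fun_prop) (by fun_prop)]
      rfl
    rw [stepIter, hprod,
      ← (measurePreserving_piFinSuccAbove (fun _ : Fin (n + 1) ↦ μ) (Fin.last n)).map_eq,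
      Measure.map_map (by fun_prop) (by fun_prop), Measure.map_map (by fun_prop) (by fun_prop)]
    congr 1
    funext x
    simp [Fin.sum_univ_castSucc, MeasurableEquiv.piFinSuccAbove, Fin.init]

lemma IsSymmMeasure.smulInvariantMeasure (hμ : IsSymmMeasure μ) :
    SMulInvariantMeasure (Fin d → ℤˣ) (Fin d → ℝ) μ where
  measure_preimage_smul ε s hs := by
    have hmap : μ.map (ε • ·) = μ := by
      convert hμ (Equiv.refl _) (fun i ↦ decide (ε i = -1)) using 2
      funext x i
      obtain h | h := Int.units_eq_one_or (ε i) <;> simp [h]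
    conv_rhs => rw [← hmap, Measure.map_apply (measurable_const_smul ε) hs]

lemma IsSymmMeasure.measure_lt_abs_eq (hμ : IsSymmMeasure μ) (M : ℝ) (i j : Fin d) :
    μ {x | M < |x i|} = μ {x | M < |x j|} := by
  conv_rhs => rw [← hμ (Equiv.swap j i) fun _ ↦ false]
  rw [Measure.map_apply (by fun_prop) (measurableSet_lt measurable_const (by fun_prop))]
  simp

lemma IsSymmMeasure.measure_compl_box_zero_le (hμ : IsSymmMeasure μ) (M : ℝ) (i : Fin d) :
    μ (box M 0)ᶜ ≤ d * μ {x | M < |x i|} := by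
  have hcover : (box M 0)ᶜ = ⋃ j, {x : Fin d → ℝ | M < |x j|} := by
    ext x; simp [box]
  calc μ (box M 0)ᶜ ≤ ∑ j, μ {x | M < |x j|} := hcover ▸ measure_iUnion_fintype_le _ _
    _ = d * μ {x | M < |x i|} := by simp [hμ.measure_lt_abs_eq M _ i]

lemma IsSymmMeasure.div_le_measureReal_lt_abs [IsFiniteMeasure μ] (hμ : IsSymmMeasure μ)
    {a M : ℝ} (ha : ENNReal.ofReal a ≤ μ (box M 0)ᶜ) (i : Fin d) :
    a / d ≤ μ.real {x | M < |x i|} := by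
  have htoReal := ENNReal.toReal_mono (by finiteness) (ha.trans (hμ.measure_compl_box_zero_le M i))
  rw [ENNReal.toReal_mul, ENNReal.toReal_natCast, mul_comm] at htoReal
  exact div_le_of_le_mul₀ (by positivity) measureReal_nonneg
    ((Real.le_coe_toNNReal a).trans htoReal)

lemma stepIter_box_le [IsProbabilityMeasure μ] (hμ : IsSymmMeasure μ) {q M : ℝ} (hq : 0 < q)
    (h : ∀ i, q ≤ μ.real {x | M < |x i|}) {n : ℕ} (hn : 1 ≤ n) (y : Fin d → ℝ) :
    stepIter μ n (box M y) ≤ ENNReal.ofReal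
      ((√(q / 2 * n))⁻¹ ^ d + d * Real.exp (-(q ^ 2 / 2 * n))) := by
  have := hμ.smulInvariantMeasure
  have : Nonempty (Fin n) := ⟨⟨0, hn⟩⟩
  have hpi := measure_pi_forall_abs_sum_sub_le_le (fun _ : Fin n ↦ μ) hq (fun _ ↦ h) y
  rw [stepIter_eq_map_sum, Measure.map_apply (by fun_prop) (measurableSet_box M y)]
  simpa [box] using hpi

end BlackboxRW

theorem statement6_general (d : ℕ) (hd : 1 ≤ d) (a₀ : ℝ) (ha₀ : 0 < a₀) :
    ∃ C > (0 : ℝ), ∀ W : SymmRW d, ∀ M : ℝ, ENNReal.ofReal a₀ ≤ W.μ (box M 0)ᶜ →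
      ∀ n : ℕ, 1 ≤ n → ∀ y : Fin d → ℝ,
        stepIter W.μ n (box M y) ≤ ENNReal.ofReal (C / (n : ℝ) ^ ((d : ℝ) / 2)) := by
  set q : ℝ := a₀ / d
  have hq : 0 < q := by positivity
  refine ⟨(√(q / 2))⁻¹ ^ d + d * (d.factorial / (q ^ 2 / 2) ^ d), by positivity, ?_⟩
  intro W M hM n hn y
  have := W.prob
  refine (stepIter_box_le W.symm hq (W.symm.div_le_measureReal_lt_abs hM) hn y).trans
    (ENNReal.ofReal_le_ofReal ?_)
  rw [inv_sqrt_mul_pow (by positivity) (by positivity), add_div, mul_div_assoc]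
  gcongr
  exact exp_neg_mul_le_div_rpow (by positivity) (mod_cast hn) d

/-- Esseen-type anti-concentration for symmetric random walks
(`cor: coro of esseen`). -/
theorem statement6 (d : ℕ) (hd : 1 ≤ d) (a₀ : ℝ) (ha₀ : 0 < a₀) :
    ∃ C > (0:ℝ), ∀ W : SymmRW d, ∀ M : ℝ, 1 ≤ M →
      ENNReal.ofReal a₀ ≤ W.μ (box M 0)ᶜ →
      ∀ n : ℕ, 1 ≤ n → ∀ y : Fin d → ℝ,
        stepIter W.μ n (box M y) ≤ ENNReal.ofReal (C / (n:ℝ) ^ ((d:ℝ)/2)) :=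
  let ⟨C, hC, h⟩ := statement6_general d hd a₀ ha₀
  ⟨C, hC, fun W M _ ↦ h W M⟩
end
end

section
/- Let d > 2 be an integer and c₀ ∈ (0,1]. There exist constants c, C > 0 depending only on (d, c₀) (and not on J) such that for every admissible kernel J on ℤ^d with constant c₀, every β ∈ [0,1], every integer m ≥ 1, and every x ∈ ℤ^d: (i) P_J[X_m = x] ≤ (C/σ_J^d)·(1/m^{d/2})·exp(−c·|x|/(σ_J·√m)); and (ii) ℂ_β(x) ≤ δ_0(x) + (C/σ_J^d)·(σ_J/(σ_J∨|x|))^{d−2}·exp(−c·√(1−β)·|x|/σ_J). -/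
open scoped ENNReal

noncomputable section

namespace Blackbox

/-- Supremum norm of a lattice point. -/
def supNorm {d : ℕ} (x : Fin d → ℤ) : ℝ :=
  ((Finset.univ.sup fun i => (x i).natAbs : ℕ) : ℝ)

/-- Squared Euclidean norm of a lattice point. -/
def sqNorm {d : ℕ} (x : Fin d → ℤ) : ℝ :=
  ∑ i, ((x i : ℝ)) ^ 2

/-- Invariance under coordinate permutations and sign flips of individual coordinates. -/
def IsSymmFun {d : ℕ} {α : Type*} (f : (Fin d → ℤ) → α) : Prop :=
  ∀ (π : Equiv.Perm (Fin d)) (e : Fin d → Bool) (x : Fin d → ℤ),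
    f (fun i => (if e i then -1 else 1) * x (π i)) = f x

/-- An admissible kernel on `ℤ^d` with constant `c₀`. -/
structure AdmissibleKernel (d : ℕ) (c₀ : ℝ) where
  J : (Fin d → ℤ) → ℝ
  nonneg : ∀ x, 0 ≤ J x
  zero_at_zero : J 0 = 0
  summable : Summable J
  norm_one : ∑' x, J x = 1
  symm : IsSymmFun J
  R : ℝ
  R_ge_one : 1 ≤ R
  range_le : ∀ x, 0 < J x → supNorm x ≤ R
  range_attained : ∃ x, 0 < J x ∧ supNorm x = R
  summable_sq : Summable fun x => sqNorm x * J x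
  sigma_lower : c₀ * R ≤ Real.sqrt (∑' x, sqNorm x * J x)
  J_upper : ∀ x, J x ≤ c₀⁻¹ / R ^ d

/-- `σ_J`, the square root of the variance of the kernel. -/
def AdmissibleKernel.sigma {d : ℕ} {c₀ : ℝ} (K : AdmissibleKernel d c₀) : ℝ :=
  Real.sqrt (∑' x, sqNorm x * K.J x)

/-- `P_J[X_m = x]`: the `m`-step distribution of the random walk with step kernel `J`. -/
def latIter {d : ℕ} (J : (Fin d → ℤ) → ℝ) : ℕ → (Fin d → ℤ) → ℝ
  | 0 => fun x => if x = 0 then 1 else 0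
  | n + 1 => fun x => ∑' y, J y * latIter J n (x - y)

/-- The massive lattice Green function `ℂ_β(x) = ∑_{m ≥ 0} β^m P_J[X_m = x]`. -/
def latGreen {d : ℕ} (J : (Fin d → ℤ) → ℝ) (β : ℝ) (x : Fin d → ℤ) : ℝ≥0∞ :=
  ∑' m : ℕ, ENNReal.ofReal (β ^ m * latIter J m x)

end Blackbox

open Blackbox

/-!
Tilting the walk by `e^{L(y)}`, with `L` linear in one coordinate, reduces a Gaussian bound on
`P[X_m = x]` to the on-diagonal bound `∫ |F|^m ≲ (R √m)^{-d}` for the characteristic function `F`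
of the tilted kernel. Pairing `y` with `-y` makes the tilt cost only a factor `e^{m ρ²}`, where
`|L| ≤ ρ` on the range of the kernel, and bounds what remains of `|F(θ)|` by `e^{-φ(θ)/8}` with
`φ(θ) = ∑ J(y) (1 - cos(2π y·2θ))`, the doubled angle coming from squaring `F`.

Near `0` the function `φ` is comparable to `R² |θ|²`, but it may be small elsewhere on the torus
too. Since `φ` satisfies the quasi-triangle inequality of a squared distance, on every box of
side of order `1/R` either `φ ≥ 1/8`, or `|F|^m` lies below a Gaussian and the untilted
characteristic function is of order one at `2θ`. In both cases the integral of `|F|^m` over the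
box is controlled by `m^{-d/2}` times that of `|F|²` plus the squared untilted characteristic
function, and over the whole torus Plancherel bounds the latter by `sup J ≲ R^{-d}`.

The Green function bound follows by summing over `m`: AM-GM splits half of the Gaussian against
`β^m ≤ e^{-m(1-β)}`, and the remaining sum of `m^{-d/2} e^{-t²/(8m)}` telescopes.
-/

namespace Blackbox

section Torus

open Finset MeasureTheory UnitAddTorus

instance isProbabilityMeasure_unitAddCircle :
    IsProbabilityMeasure (volume : Measure UnitAddCircle) :=
  ⟨UnitAddCircle.measure_univ⟩

/-- The covering map `ℝ^ι → (ℝ/ℤ)^ι`. -/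
def toTorus {ι : Type*} (s : ι → ℝ) : UnitAddTorus ι := fun i => (s i : UnitAddCircle)

theorem toTorus_sub {ι : Type*} (s t : ι → ℝ) : toTorus (s - t) = toTorus s - toTorus t := rfl

theorem two_nsmul_toTorus {ι : Type*} (s : ι → ℝ) : 2 • toTorus s = toTorus (2 • s) := rfl

theorem continuous_toTorus {ι : Type*} : Continuous (toTorus : (ι → ℝ) → UnitAddTorus ι) :=
  continuous_pi fun i => (AddCircle.continuous_mk' 1).comp (continuous_apply i)

variable {ι : Type*} [Fintype ι]

theorem norm_mFourier_apply (n : ι → ℤ) (θ : UnitAddTorus ι) : ‖mFourier n θ‖ = 1 := by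
  simp only [mFourier, ContinuousMap.coe_mk, fourier_apply, norm_prod, Circle.norm_coe,
    prod_const_one]

theorem mFourier_apply_add (n : ι → ℤ) (θ φ : UnitAddTorus ι) :
    mFourier n (θ + φ) = mFourier n θ * mFourier n φ := by
  simp [mFourier, fourier_apply, AddCircle.toCircle_add, prod_mul_distrib]

theorem mFourier_apply_neg (n : ι → ℤ) (θ : UnitAddTorus ι) :
    mFourier n (-θ) = (starRingEnd ℂ) (mFourier n θ) := by
  simp [mFourier, fourier_apply, ← Circle.coe_inv_eq_conj, AddCircle.toCircle_neg]

theorem integral_mFourier (n : ι → ℤ) :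
    ∫ θ : UnitAddTorus ι, mFourier n θ = if n = 0 then 1 else 0 := by
  classical
  split_ifs with hn
  · simp [hn, mFourier_zero]
  · obtain ⟨i, hi⟩ := Function.ne_iff.mp hn
    have h_half : ∀ θ : UnitAddTorus ι,
        mFourier n (θ + Pi.single i ((1 / 2 / n i : ℝ) : UnitAddCircle)) = -mFourier n θ := by
      intro θ
      have h_single : mFourier n (Pi.single i ((1 / 2 / n i : ℝ) : UnitAddCircle)) = -1 := by
        have h1 := fourier_add_half_inv_index (T := 1) hi one_pos 0
        simp only [mFourier, ContinuousMap.coe_mk]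
        rw [prod_eq_single i]
        · simpa using h1
        · intro j _ hj
          simp [hj]
        · simp
      rw [mFourier_apply_add, h_single, mul_neg_one]
    exact integral_eq_zero_of_add_right_eq_neg h_half

theorem mFourier_toTorus (n : ι → ℤ) (s : ι → ℝ) :
    mFourier n (toTorus s) = Complex.exp ((2 * Real.pi * ∑ i, n i * s i : ℝ) * Complex.I) := by
  simp only [mFourier, toTorus, ContinuousMap.coe_mk, fourier_coe_apply, ← Complex.exp_sum]
  push_cast
  rw [mul_sum, sum_mul]
  exact congrArg _ (sum_congr rfl fun i _ => by ring)

theorem re_mFourier_toTorus (n : ι → ℤ) (s : ι → ℝ) :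
    (mFourier n (toTorus s)).re = Real.cos (2 * Real.pi * ∑ i, n i * s i) := by
  rw [mFourier_toTorus, Complex.exp_ofReal_mul_I_re]

theorem measurePreserving_two_nsmul :
    MeasurePreserving (fun θ : UnitAddTorus ι => 2 • θ) :=
  measurePreserving_pi (β := fun _ : ι => UnitAddCircle) (fun _ => volume) (fun _ => volume)
    fun _ => (AddCircle.ergodic_nsmul one_lt_two).toMeasurePreserving

theorem integrable_of_continuous {E : Type*} [NormedAddCommGroup E] {f : UnitAddTorus ι → E}
    (hf : Continuous f) : Integrable f :=
  hf.integrable_of_hasCompactSupport (HasCompactSupport.of_compactSpace f)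

theorem integrable_translate {f : UnitAddTorus ι → ℝ} (hf : Continuous f)
    (μ : Measure (ι → ℝ)) [IsFiniteMeasure μ] :
    Integrable (fun p : UnitAddTorus ι × (ι → ℝ) => f (p.1 + toTorus p.2)) (volume.prod μ) := by
  obtain ⟨M, hM⟩ := isCompact_univ.exists_bound_of_continuousOn hf.continuousOn
  have h_cont : Continuous fun p : UnitAddTorus ι × (ι → ℝ) => f (p.1 + toTorus p.2) :=
    hf.comp (continuous_fst.add (continuous_toTorus.comp continuous_snd))
  exact .of_bound h_cont.aestronglyMeasurable M (.of_forall fun p => hM _ (Set.mem_univ _))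

theorem integral_setIntegral_translate {f : UnitAddTorus ι → ℝ} (hf : Continuous f)
    {B : Set (ι → ℝ)} (hB : volume B ≠ ⊤) :
    ∫ θ, ∫ s in B, f (θ + toTorus s) = volume.real B * ∫ θ, f θ := by
  have := isFiniteMeasure_restrict.2 hB
  rw [integral_integral_swap (integrable_translate hf _)]
  simp [integral_add_right_eq_self]

theorem integral_le_of_forall_setIntegral_translate_le {f g : UnitAddTorus ι → ℝ}
    (hf : Continuous f) (hg : Continuous g) {B : Set (ι → ℝ)} (hB₀ : volume B ≠ 0)
    (hB : volume B ≠ ⊤) {C : ℝ}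
    (h : ∀ θ, ∫ s in B, f (θ + toTorus s) ≤ C * ∫ s in B, g (θ + toTorus s)) :
    ∫ θ, f θ ≤ C * ∫ θ, g θ := by
  have h_int : ∀ {F : UnitAddTorus ι → ℝ}, Continuous F →
      Integrable fun θ => ∫ s in B, F (θ + toTorus s) := by
    intro F hF
    have := isFiniteMeasure_restrict.2 hB
    exact (integrable_translate hF (volume.restrict B)).integral_prod_left
  have h_avg : volume.real B * ∫ θ, f θ ≤ volume.real B * (C * ∫ θ, g θ) := by
    calc volume.real B * ∫ θ, f θ = ∫ θ, ∫ s in B, f (θ + toTorus s) :=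
          (integral_setIntegral_translate hf hB).symm
      _ ≤ ∫ θ, C * ∫ s in B, g (θ + toTorus s) :=
          integral_mono (h_int hf) ((h_int hg).const_mul C) h
      _ = volume.real B * (C * ∫ θ, g θ) := by
          rw [integral_const_mul, integral_setIntegral_translate hg hB]
          ring
  exact le_of_mul_le_mul_left h_avg (ENNReal.toReal_pos hB₀ hB)

end Torus

section FourierSum

open Finset MeasureTheory UnitAddTorus

variable {ι : Type*} [Fintype ι]

/-- The trigonometric polynomial `∑_{y ∈ S} w(y) e^{2πi y·θ}`, the characteristic function of the
weights `w`. -/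
def fourierSum (S : Finset (ι → ℤ)) (w : (ι → ℤ) → ℝ) (θ : UnitAddTorus ι) : ℂ :=
  ∑ y ∈ S, w y * mFourier y θ

/-- The real part of `∑_{y ∈ S} w(y) (1 - e^{2πi y·θ})`: the amount by which the real part of the
characteristic function of `w` at `θ` falls short of the total mass. -/
def fourierGap (S : Finset (ι → ℤ)) (w : (ι → ℤ) → ℝ) (θ : UnitAddTorus ι) : ℝ :=
  ∑ y ∈ S, w y * (1 - (mFourier y θ).re)

variable {S : Finset (ι → ℤ)} {w : (ι → ℤ) → ℝ}

theorem continuous_fourierSum : Continuous (fourierSum S w) :=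
  continuous_finsetSum _ fun y _ => continuous_const.mul (mFourier y).continuous

theorem continuous_fourierGap : Continuous (fourierGap S w) :=
  continuous_finsetSum _ fun y _ => continuous_const.mul
    (continuous_const.sub (Complex.continuous_re.comp (mFourier y).continuous))

theorem re_fourierSum (θ : UnitAddTorus ι) :
    (fourierSum S w θ).re = ∑ y ∈ S, w y - fourierGap S w θ := by
  simp only [fourierSum, fourierGap, Complex.re_sum, Complex.re_ofReal_mul, ← sum_sub_distrib]
  exact sum_congr rfl fun y _ => by ring

theorem fourierGap_nonneg (hw : ∀ y ∈ S, 0 ≤ w y) (θ : UnitAddTorus ι) :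
    0 ≤ fourierGap S w θ :=
  sum_nonneg fun y hy => mul_nonneg (hw y hy) (sub_nonneg.2
    ((Complex.re_le_norm _).trans (norm_mFourier_apply y θ).le))

theorem integral_norm_fourierSum_sq :
    ∫ θ, ‖fourierSum S w θ‖ ^ 2 = ∑ y ∈ S, w y ^ 2 := by
  classical
  have h_expand : ∀ θ, ((‖fourierSum S w θ‖ ^ 2 : ℝ) : ℂ) =
      ∑ y ∈ S, ∑ z ∈ S, (w y * w z : ℂ) * mFourier (y - z) θ := by
    intro θ
    rw [Complex.ofReal_pow, ← Complex.mul_conj', fourierSum, map_sum, sum_mul_sum]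
    refine sum_congr rfl fun y _ => sum_congr rfl fun z _ => ?_
    rw [map_mul, Complex.conj_ofReal, sub_eq_add_neg, mFourier_add, mFourier_neg]
    ring
  have h_int : ∀ y z, Integrable fun θ => (w y * w z : ℂ) * mFourier (y - z) θ := fun y z =>
    integrable_of_continuous (continuous_const.mul (mFourier (y - z)).continuous)
  apply Complex.ofReal_injective
  rw [← integral_complex_ofReal]
  simp_rw [h_expand]
  rw [integral_finsetSum _ fun y _ => integrable_finsetSum _ fun z _ => h_int y z]
  simp_rw [integral_finsetSum _ fun z _ => h_int _ z, integral_const_mul, integral_mFourier,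
    sub_eq_zero]
  simp +contextual [pow_two]

theorem one_sub_re_mul_conj_le {z w : ℂ} (hz : ‖z‖ = 1) (hw : ‖w‖ = 1) :
    1 - (z * (starRingEnd ℂ) w).re ≤ 2 * ((1 - z.re) + (1 - w.re)) := by
  have hz' : z.re ^ 2 + z.im ^ 2 = 1 := by
    rw [← one_pow 2, ← hz, Complex.sq_norm, Complex.normSq_apply]; ring
  have hw' : w.re ^ 2 + w.im ^ 2 = 1 := by
    rw [← one_pow 2, ← hw, Complex.sq_norm, Complex.normSq_apply]; ring
  simp only [Complex.mul_re, Complex.conj_re, Complex.conj_im]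
  nlinarith [sq_nonneg (2 - z.re - w.re), sq_nonneg (z.im + w.im)]

theorem fourierGap_sub_le (hw : ∀ y ∈ S, 0 ≤ w y) (θ φ : UnitAddTorus ι) :
    fourierGap S w (θ - φ) ≤ 2 * (fourierGap S w θ + fourierGap S w φ) := by
  simp only [fourierGap, ← sum_add_distrib, mul_sum]
  refine sum_le_sum fun y hy => ?_
  rw [sub_eq_add_neg θ φ, mFourier_apply_add, mFourier_apply_neg]
  have h_pair := mul_le_mul_of_nonneg_left
    (one_sub_re_mul_conj_le (norm_mFourier_apply y θ) (norm_mFourier_apply y φ)) (hw y hy)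
  linarith

theorem le_fourierGap_toTorus (hw : ∀ y ∈ S, 0 ≤ w y) {s : ι → ℝ}
    (hs : ∀ y ∈ S, |∑ i, y i * s i| ≤ 1 / 2) :
    8 * ∑ y ∈ S, w y * (∑ i, y i * s i) ^ 2 ≤ fourierGap S w (toTorus s) := by
  rw [fourierGap, mul_sum]
  refine sum_le_sum fun y hy => ?_
  have h_abs : |2 * Real.pi * ∑ i, y i * s i| ≤ Real.pi := by
    rw [abs_mul, abs_of_pos Real.two_pi_pos]
    nlinarith [hs y hy, Real.pi_pos]
  have h_cos := Real.cos_le_one_sub_mul_cos_sq h_abs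
  have h_simp : 2 / Real.pi ^ 2 * (2 * Real.pi * ∑ i, y i * s i) ^ 2 =
      8 * (∑ i, y i * s i) ^ 2 := by
    field_simp
    ring
  rw [re_mFourier_toTorus]
  nlinarith [hw y hy]

theorem fourierGap_toTorus_le (hw : ∀ y ∈ S, 0 ≤ w y) (hw₁ : ∑ y ∈ S, w y = 1) {s : ι → ℝ}
    {ε : ℝ} (hs : ∀ y ∈ S, |∑ i, y i * s i| ≤ ε) :
    fourierGap S w (toTorus s) ≤ 2 * Real.pi ^ 2 * ε ^ 2 := by
  calc fourierGap S w (toTorus s) ≤ ∑ y ∈ S, w y * (2 * Real.pi ^ 2 * ε ^ 2) := by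
        refine sum_le_sum fun y hy => mul_le_mul_of_nonneg_left ?_ (hw y hy)
        rw [re_mFourier_toTorus]
        have h_cos := Real.one_sub_sq_div_two_le_cos (x := 2 * Real.pi * ∑ i, y i * s i)
        have h_sq : (∑ i, y i * s i) ^ 2 ≤ ε ^ 2 := sq_le_sq' (neg_le_of_abs_le (hs y hy))
          (le_of_abs_le (hs y hy))
        nlinarith [sq_nonneg Real.pi]
    _ = 2 * Real.pi ^ 2 * ε ^ 2 := by rw [← sum_mul, hw₁, one_mul]

end FourierSum

section Tilt

open Finset UnitAddTorus

variable {ι : Type*} {S : Finset (ι → ℤ)} {J : (ι → ℤ) → ℝ} {L : (ι → ℤ) →+ ℝ}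

/-- The exponential tilt `y ↦ J(y) e^{L(y)}` of the weights `J` by the linear form `L`. -/
def expTilt (L : (ι → ℤ) →+ ℝ) (J : (ι → ℤ) → ℝ) (y : ι → ℤ) : ℝ :=
  J y * Real.exp (L y)

theorem sum_expTilt_sq_le (hJ : ∀ y ∈ S, 0 ≤ J y) (hJ₁ : ∑ y ∈ S, J y = 1) {B : ℝ}
    (hB : ∀ y ∈ S, J y ≤ B) {ρ : ℝ} (hL : ∀ y ∈ S, |L y| ≤ ρ) :
    ∑ y ∈ S, expTilt L J y ^ 2 ≤ Real.exp (2 * ρ) * B := by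
  calc ∑ y ∈ S, expTilt L J y ^ 2 ≤ ∑ y ∈ S, J y * (Real.exp (2 * ρ) * B) := by
        refine sum_le_sum fun y hy => ?_
        have h_exp : Real.exp (L y) ^ 2 ≤ Real.exp (2 * ρ) := by
          rw [← Real.exp_nat_mul]
          exact Real.exp_le_exp.2 (by push_cast; linarith [le_of_abs_le (hL y hy)])
        calc expTilt L J y ^ 2 = J y * (Real.exp (L y) ^ 2 * J y) := by rw [expTilt]; ring
          _ ≤ J y * (Real.exp (2 * ρ) * B) :=
            mul_le_mul_of_nonneg_left
              (mul_le_mul h_exp (hB y hy) (hJ y hy) (Real.exp_pos _).le) (hJ y hy)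
    _ = Real.exp (2 * ρ) * B := by rw [← sum_mul, hJ₁, one_mul]

variable [Fintype ι]

theorem norm_exp_mul_add_exp_neg_mul_conj_sq {z : ℂ} (hz : ‖z‖ = 1) (u : ℝ) :
    ‖(Real.exp u * z + Real.exp (-u) * (starRingEnd ℂ) z) / 2‖ ^ 2 =
      (Real.cosh (2 * u) + (z ^ 2).re) / 2 := by
  have hz' : z.re ^ 2 + z.im ^ 2 = 1 := by
    rw [← one_pow 2, ← hz, Complex.sq_norm, Complex.normSq_apply]; ring
  have h_inv : Real.exp u * Real.exp (-u) = 1 := by rw [← Real.exp_add]; simp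
  have h_cosh : Real.cosh (2 * u) = (Real.exp u ^ 2 + Real.exp (-u) ^ 2) / 2 := by
    rw [Real.cosh_eq, ← Real.exp_nat_mul, ← Real.exp_nat_mul]
    push_cast
    ring_nf
  rw [norm_div, div_pow, Complex.sq_norm, Complex.normSq_apply, h_cosh]
  simp only [Complex.add_re, Complex.add_im, Complex.im_ofReal_mul, Complex.conj_re,
    Complex.conj_im, Complex.norm_ofNat, pow_two z, Complex.mul_re]
  linear_combination (Real.exp u ^ 2 + Real.exp (-u) ^ 2) / 4 * hz' +
    (z.re ^ 2 - z.im ^ 2) / 2 * h_inv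

theorem fourierSum_expTilt_eq_symmetrization (hS : ∀ y ∈ S, -y ∈ S)
    (h_neg : ∀ y, J (-y) = J y) (θ : UnitAddTorus ι) :
    fourierSum S (expTilt L J) θ = ∑ y ∈ S, J y *
      ((Real.exp (L y) * mFourier y θ + Real.exp (-L y) * (starRingEnd ℂ) (mFourier y θ)) / 2) := by
  have h_flip : fourierSum S (expTilt L J) θ =
      ∑ y ∈ S, (J y * Real.exp (-L y) : ℂ) * (starRingEnd ℂ) (mFourier y θ) := by
    refine sum_nbij' (- ·) (- ·) hS hS (fun _ _ => neg_neg _) (fun _ _ => neg_neg _) fun y _ => ?_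
    simp [expTilt, h_neg, mFourier_neg]
  calc fourierSum S (expTilt L J) θ
      = (fourierSum S (expTilt L J) θ + fourierSum S (expTilt L J) θ) / 2 := by ring
    _ = (∑ y ∈ S, expTilt L J y * mFourier y θ +
          ∑ y ∈ S, (J y * Real.exp (-L y) : ℂ) * (starRingEnd ℂ) (mFourier y θ)) / 2 :=
        congrArg (fun z => (fourierSum S (expTilt L J) θ + z) / 2) h_flip
    _ = _ := by
        rw [← sum_add_distrib, sum_div]
        refine sum_congr rfl fun y _ => ?_
        simp only [expTilt, Complex.ofReal_mul]
        ring

theorem norm_fourierSum_expTilt_sq_le (hJ : ∀ y ∈ S, 0 ≤ J y) (hJ₁ : ∑ y ∈ S, J y = 1)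
    (hS : ∀ y ∈ S, -y ∈ S) (h_neg : ∀ y, J (-y) = J y) {ρ : ℝ} (hL : ∀ y ∈ S, |L y| ≤ ρ)
    (θ : UnitAddTorus ι) :
    ‖fourierSum S (expTilt L J) θ‖ ^ 2 ≤
      (Real.exp (2 * ρ ^ 2) + (1 - fourierGap S J (2 • θ))) / 2 := by
  have h_cosh : ∀ y ∈ S, Real.cosh (2 * L y) ≤ Real.exp (2 * ρ ^ 2) := by
    intro y hy
    refine (Real.cosh_le_exp_half_sq _).trans (Real.exp_le_exp.2 ?_)
    linarith [sq_le_sq' (neg_le_of_abs_le (hL y hy)) (le_of_abs_le (hL y hy))]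
  rw [fourierSum_expTilt_eq_symmetrization hS h_neg]
  set G : (ι → ℤ) → ℂ := fun y =>
    (Real.exp (L y) * mFourier y θ + Real.exp (-L y) * (starRingEnd ℂ) (mFourier y θ)) / 2
  calc ‖∑ y ∈ S, J y * G y‖ ^ 2 ≤ (∑ y ∈ S, J y * ‖G y‖) ^ 2 := by
        gcongr
        refine (norm_sum_le _ _).trans_eq (sum_congr rfl fun y hy => ?_)
        rw [norm_mul, Complex.norm_real, Real.norm_of_nonneg (hJ y hy)]
    _ ≤ ∑ y ∈ S, J y * ‖G y‖ ^ 2 :=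
        Real.pow_arith_mean_le_arith_mean_pow S _ _ hJ hJ₁ (fun y _ => norm_nonneg _) 2
    _ ≤ ∑ y ∈ S, J y * ((Real.exp (2 * ρ ^ 2) + (mFourier y (2 • θ)).re) / 2) := by
        refine sum_le_sum fun y hy => mul_le_mul_of_nonneg_left ?_ (hJ y hy)
        rw [norm_exp_mul_add_exp_neg_mul_conj_sq (norm_mFourier_apply y θ), two_nsmul,
          mFourier_apply_add, pow_two]
        linarith [h_cosh y hy]
    _ = (Real.exp (2 * ρ ^ 2) * ∑ y ∈ S, J y +
          (∑ y ∈ S, J y - fourierGap S J (2 • θ))) / 2 := by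
        rw [fourierGap, ← sum_sub_distrib, mul_sum, ← sum_add_distrib, sum_div]
        exact sum_congr rfl fun y _ => by ring
    _ = (Real.exp (2 * ρ ^ 2) + (1 - fourierGap S J (2 • θ))) / 2 := by rw [hJ₁, mul_one]

theorem norm_fourierSum_expTilt_le (hJ : ∀ y ∈ S, 0 ≤ J y) (hJ₁ : ∑ y ∈ S, J y = 1)
    (hS : ∀ y ∈ S, -y ∈ S) (h_neg : ∀ y, J (-y) = J y) {ρ : ℝ} (hρ : |ρ| ≤ 1 / 2)
    (hL : ∀ y ∈ S, |L y| ≤ ρ) (θ : UnitAddTorus ι) :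
    ‖fourierSum S (expTilt L J) θ‖ ≤ Real.exp (ρ ^ 2 - fourierGap S J (2 • θ) / 8) := by
  have h_one : 1 ≤ Real.exp (2 * ρ ^ 2) := Real.one_le_exp (by positivity)
  have h_two : Real.exp (2 * ρ ^ 2) ≤ 2 := by
    refine (Real.le_log_iff_exp_le two_pos).1 ?_
    nlinarith [Real.log_two_gt_d9, sq_le_sq' (neg_le_of_abs_le hρ) (le_of_abs_le hρ)]
  have h_gap : 0 ≤ fourierGap S J (2 • θ) := fourierGap_nonneg hJ _
  refine le_of_sq_le_sq ?_ (Real.exp_pos _).le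
  calc ‖fourierSum S (expTilt L J) θ‖ ^ 2
      ≤ (Real.exp (2 * ρ ^ 2) + (1 - fourierGap S J (2 • θ))) / 2 :=
        norm_fourierSum_expTilt_sq_le hJ hJ₁ hS h_neg hL θ
    _ ≤ Real.exp (2 * ρ ^ 2) * (1 - fourierGap S J (2 • θ) / 4) := by nlinarith
    _ ≤ Real.exp (2 * ρ ^ 2) * Real.exp (-(fourierGap S J (2 • θ) / 4)) := by
        gcongr
        exact Real.one_sub_le_exp_neg _
    _ = Real.exp (ρ ^ 2 - fourierGap S J (2 • θ) / 8) ^ 2 := by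
        rw [← Real.exp_add, ← Real.exp_nat_mul]
        congr 1
        push_cast
        ring

end Tilt

section Gaussian

open Finset MeasureTheory

variable {ι : Type*} [Fintype ι]

theorem exp_neg_mul_sum_sq (a : ℝ) (s : ι → ℝ) :
    Real.exp (-a * ∑ i, s i ^ 2) = ∏ i, Real.exp (-a * s i ^ 2) := by
  rw [mul_sum, Real.exp_sum]

theorem integrable_exp_neg_mul_sum_sq {a : ℝ} (ha : 0 < a) :
    Integrable fun s : ι → ℝ => Real.exp (-a * ∑ i, s i ^ 2) := by
  simp_rw [exp_neg_mul_sum_sq]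
  exact Integrable.fintype_prod fun _ => integrable_exp_neg_mul_sq ha

theorem integral_exp_neg_mul_sum_sq (a : ℝ) :
    ∫ s : ι → ℝ, Real.exp (-a * ∑ i, s i ^ 2) = √(Real.pi / a) ^ Fintype.card ι := by
  simp_rw [exp_neg_mul_sum_sq]
  rw [integral_fintype_prod_volume_eq_pow (fun x : ℝ => Real.exp (-a * x ^ 2)), integral_gaussian]

theorem sqrt_pow_le_mul_exp {v a : ℝ} (hv : 1 ≤ v) (ha : 0 < a) (d : ℕ) :
    √v ^ d ≤ a ^ d * d.factorial * Real.exp (v / a) := by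
  calc √v ^ d ≤ v ^ d := by
        gcongr
        exact (Real.sqrt_le_left (by linarith)).2 (le_self_pow₀ hv two_ne_zero)
    _ = a ^ d * d.factorial * ((v / a) ^ d / d.factorial) := by
        rw [div_pow]
        field_simp
    _ ≤ a ^ d * d.factorial * Real.exp (v / a) := by
        gcongr
        exact Real.pow_div_factorial_le_exp _ (by positivity) d

theorem pow_le_of_le_exp_neg {q : ℝ} (hq₀ : 0 ≤ q) (hq : q ≤ Real.exp (-(1 / 64))) {m : ℕ}
    (hm : 2 ≤ m) (d : ℕ) :
    q ^ m ≤ 2 * (64 ^ d * d.factorial) / √m ^ d * q ^ 2 := by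
  obtain ⟨n, rfl⟩ := Nat.exists_eq_add_of_le' hm
  have h_two : Real.exp (2 / 64) ≤ 2 := by
    refine (Real.le_log_iff_exp_le two_pos).1 ?_
    linarith [Real.log_two_gt_d9]
  have h_decay : Real.exp (-(((n + 2 : ℕ) : ℝ) / 64)) ≤
      64 ^ d * d.factorial / √((n + 2 : ℕ) : ℝ) ^ d := by
    rw [Real.exp_neg, inv_le_comm₀ (by positivity) (by positivity), inv_div,
      div_le_iff₀' (by positivity)]
    exact sqrt_pow_le_mul_exp (by push_cast; linarith [n.cast_nonneg (α := ℝ)]) (by norm_num) d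
  have h_pow : q ^ n ≤ 2 * (64 ^ d * d.factorial) / √((n + 2 : ℕ) : ℝ) ^ d := by
    calc q ^ n ≤ Real.exp (-(1 / 64)) ^ n := by gcongr
      _ = Real.exp (2 / 64) * Real.exp (-(((n + 2 : ℕ) : ℝ) / 64)) := by
          rw [← Real.exp_nat_mul, ← Real.exp_add]
          push_cast
          ring_nf
      _ ≤ 2 * (64 ^ d * d.factorial / √((n + 2 : ℕ) : ℝ) ^ d) := by gcongr
      _ = _ := by ring
  rw [pow_add]
  gcongr

end Gaussian

section LocalComparison

open Finset MeasureTheory Metric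

variable {ι : Type*} [Fintype ι]

/-- The constant in the comparison of `∫ f ^ m` with `∫ (f ^ 2 + g)`: the first summand accounts for
the boxes on which `φ > 1/8`, the second for the boxes on which `f ^ m` is a Gaussian. -/
def comparisonConst (d : ℕ) (lam δ : ℝ) : ℝ :=
  2 * (64 ^ d * d.factorial) + 4 * (√(32 * Real.pi / lam) / (2 * δ)) ^ d

theorem le_comparisonConst_left (d : ℕ) (lam : ℝ) {δ : ℝ} (hδ : 0 ≤ δ) :
    2 * (64 ^ d * d.factorial) ≤ comparisonConst d lam δ :=
  le_add_of_nonneg_right (by positivity)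

theorem le_comparisonConst_right (d : ℕ) (lam δ : ℝ) :
    4 * (√(32 * Real.pi / lam) / (2 * δ)) ^ d ≤ comparisonConst d lam δ :=
  le_add_of_nonneg_left (by positivity)

theorem one_le_comparisonConst (d : ℕ) (lam : ℝ) {δ : ℝ} (hδ : 0 ≤ δ) :
    1 ≤ comparisonConst d lam δ := by
  have h_pow : (1 : ℝ) ≤ 64 ^ d := one_le_pow₀ (by norm_num)
  have h_fact : (1 : ℝ) ≤ d.factorial := mod_cast d.factorial_pos
  nlinarith [le_comparisonConst_left d lam hδ]

theorem comparisonConst_pos (d : ℕ) (lam : ℝ) {δ : ℝ} (hδ : 0 ≤ δ) : 0 < comparisonConst d lam δ :=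
  one_pos.trans_le (one_le_comparisonConst d lam hδ)

theorem volume_real_closedBall {δ : ℝ} (hδ : 0 ≤ δ) :
    volume.real (closedBall (0 : ι → ℝ) δ) = (2 * δ) ^ Fintype.card ι := by
  rw [measureReal_def, Real.volume_pi_closedBall _ hδ, ENNReal.toReal_ofReal (by positivity)]

theorem integrableOn_closedBall_translate {f : UnitAddTorus ι → ℝ} (hf : Continuous f)
    (θ : UnitAddTorus ι) (δ : ℝ) :
    IntegrableOn (fun s => f (θ + toTorus s)) (closedBall 0 δ) :=
  (hf.comp (continuous_const.add continuous_toTorus)).continuousOn.integrableOn_compact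
    (isCompact_closedBall _ _)

/-- A function on the torus that behaves like the squared distance to `0`: it satisfies the
quasi-triangle inequality of a square, and on the box of half-width `2 δ` it is at least
`lam * |s|²` while staying below `1/8`. -/
structure IsQuadraticGap (φ : UnitAddTorus ι → ℝ) (lam δ : ℝ) : Prop where
  continuous : Continuous φ
  sub_le : ∀ θ η, φ (θ - η) ≤ 2 * (φ θ + φ η)
  quadratic_le : ∀ s : ι → ℝ, ‖s‖ ≤ 2 * δ → lam * ∑ i, s i ^ 2 ≤ φ (toTorus s)
  le_eighth : ∀ s : ι → ℝ, ‖s‖ ≤ 2 * δ → φ (toTorus s) ≤ 1 / 8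

namespace IsQuadraticGap

variable {φ f g : UnitAddTorus ι → ℝ} {lam δ : ℝ}

theorem le_half (hφ : IsQuadraticGap φ lam δ) {θ : UnitAddTorus ι} {s t : ι → ℝ}
    (ht : t ∈ closedBall 0 δ) (hφt : φ (θ + toTorus t) ≤ 1 / 8) (hs : s ∈ closedBall 0 δ) :
    φ (θ + toTorus s) ≤ 1 / 2 := by
  rw [mem_closedBall_zero_iff] at hs ht
  have h_eq : θ + toTorus s = (θ + toTorus t) - toTorus (t - s) := by rw [toTorus_sub]; abel
  rw [h_eq]
  have h_norm : ‖t - s‖ ≤ 2 * δ := (norm_sub_le t s).trans (by linarith)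
  linarith [hφ.sub_le (θ + toTorus t) (toTorus (t - s)), hφ.le_eighth _ h_norm]

theorem exists_quadratic_le (hφ : IsQuadraticGap φ lam δ) (hδ : 0 ≤ δ) (θ : UnitAddTorus ι) :
    ∃ t : ι → ℝ, ∀ s ∈ closedBall (0 : ι → ℝ) δ,
      lam / 4 * ∑ i, (s i - t i) ^ 2 ≤ φ (θ + toTorus s) := by
  obtain ⟨t, ht, h_min⟩ := (isCompact_closedBall (0 : ι → ℝ) δ).exists_isMinOn
    ⟨0, mem_closedBall_self hδ⟩
    (hφ.continuous.comp (continuous_const.add continuous_toTorus) :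
      Continuous fun s => φ (θ + toTorus s)).continuousOn
  refine ⟨t, fun s hs => ?_⟩
  have h_le : φ (θ + toTorus t) ≤ φ (θ + toTorus s) := h_min hs
  rw [mem_closedBall_zero_iff] at hs ht
  have h_quad := hφ.quadratic_le (s - t) ((norm_sub_le s t).trans (by linarith))
  have h_sub := hφ.sub_le (θ + toTorus s) (θ + toTorus t)
  rw [add_sub_add_left_eq_sub, ← toTorus_sub] at h_sub
  simp only [Pi.sub_apply] at h_quad
  linarith

theorem exists_pow_le_gaussian (hφ : IsQuadraticGap φ lam δ) (hδ : 0 ≤ δ) (hf₀ : ∀ θ, 0 ≤ f θ)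
    (hfφ : ∀ θ, f θ ≤ Real.exp (-(φ θ / 8))) (m : ℕ) (θ : UnitAddTorus ι) :
    ∃ t : ι → ℝ, ∀ s ∈ closedBall (0 : ι → ℝ) δ,
      f (θ + toTorus s) ^ m ≤ Real.exp (-(lam * m / 32) * ∑ i, (s i - t i) ^ 2) := by
  obtain ⟨t, ht⟩ := hφ.exists_quadratic_le hδ θ
  refine ⟨t, fun s hs => ?_⟩
  calc f (θ + toTorus s) ^ m ≤ Real.exp (-(φ (θ + toTorus s) / 8)) ^ m :=
        pow_le_pow_left₀ (hf₀ _) (hfφ _) m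
    _ = Real.exp (-(m / 8) * φ (θ + toTorus s)) := by
        rw [← Real.exp_nat_mul]
        ring_nf
    _ ≤ Real.exp (-(lam * m / 32) * ∑ i, (s i - t i) ^ 2) := by
        refine Real.exp_le_exp.2 ?_
        have h_quad := mul_le_mul_of_nonneg_left (ht s hs) (by positivity : (0 : ℝ) ≤ m / 8)
        linear_combination h_quad

theorem setIntegral_pow_le (hφ : IsQuadraticGap φ lam δ) (hlam : 0 < lam) (hδ : 0 ≤ δ)
    (hf : Continuous f) (hf₀ : ∀ θ, 0 ≤ f θ) (hfφ : ∀ θ, f θ ≤ Real.exp (-(φ θ / 8))) {m : ℕ}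
    (hm : 0 < m) (θ : UnitAddTorus ι) :
    ∫ s in closedBall 0 δ, f (θ + toTorus s) ^ m ≤
      √(Real.pi / (lam * m / 32)) ^ Fintype.card ι := by
  obtain ⟨t, ht⟩ := hφ.exists_pow_le_gaussian hδ hf₀ hfφ m θ
  have h_gauss : Integrable fun s : ι → ℝ => Real.exp (-(lam * m / 32) * ∑ i, s i ^ 2) :=
    integrable_exp_neg_mul_sum_sq (by positivity)
  calc ∫ s in closedBall 0 δ, f (θ + toTorus s) ^ m
      ≤ ∫ s in closedBall 0 δ, Real.exp (-(lam * m / 32) * ∑ i, (s - t) i ^ 2) :=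
        setIntegral_mono_on (integrableOn_closedBall_translate (hf.pow m) θ δ)
          (h_gauss.comp_sub_right t).integrableOn measurableSet_closedBall ht
    _ ≤ ∫ s : ι → ℝ, Real.exp (-(lam * m / 32) * ∑ i, (s - t) i ^ 2) :=
        setIntegral_le_integral (h_gauss.comp_sub_right t) (.of_forall fun s => (Real.exp_pos _).le)
    _ = √(Real.pi / (lam * m / 32)) ^ Fintype.card ι := by
        rw [integral_sub_right_eq_self
          (fun s : ι → ℝ => Real.exp (-(lam * m / 32) * ∑ i, s i ^ 2)) t,
          integral_exp_neg_mul_sum_sq]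

theorem le_setIntegral (hφ : IsQuadraticGap φ lam δ) (hδ : 0 ≤ δ) (hg : Continuous g)
    (hgφ : ∀ θ, φ θ ≤ 1 / 2 → 1 / 4 ≤ g θ) {θ : UnitAddTorus ι} {t : ι → ℝ}
    (ht : t ∈ closedBall 0 δ) (hφt : φ (θ + toTorus t) ≤ 1 / 8) :
    1 / 4 * (2 * δ) ^ Fintype.card ι ≤ ∫ s in closedBall 0 δ, g (θ + toTorus s) := by
  rw [← volume_real_closedBall hδ, mul_comm, ← smul_eq_mul, ← setIntegral_const]
  exact setIntegral_mono_on (integrableOn_const measure_closedBall_lt_top.ne)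
    (integrableOn_closedBall_translate hg θ δ) measurableSet_closedBall
    fun s hs => hgφ _ (hφ.le_half ht hφt hs)

theorem setIntegral_pow_le_setIntegral (hφ : IsQuadraticGap φ lam δ) (hlam : 0 < lam) (hδ : 0 < δ)
    (hf : Continuous f) (hf₀ : ∀ θ, 0 ≤ f θ) (hfφ : ∀ θ, f θ ≤ Real.exp (-(φ θ / 8)))
    (hg : Continuous g) (hg₀ : ∀ θ, 0 ≤ g θ) (hgφ : ∀ θ, φ θ ≤ 1 / 2 → 1 / 4 ≤ g θ)
    {m : ℕ} (hm : 2 ≤ m) (θ : UnitAddTorus ι) :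
    ∫ s in closedBall 0 δ, f (θ + toTorus s) ^ m ≤
      comparisonConst (Fintype.card ι) lam δ / √m ^ Fintype.card ι *
        ∫ s in closedBall 0 δ, (f (θ + toTorus s) ^ 2 + g (θ + toTorus s)) := by
  have hm' : (0 : ℝ) < m := by positivity
  have h_pos := comparisonConst_pos (Fintype.card ι) lam hδ.le
  have hfg := (hf.pow 2).add hg
  by_cases h_far : ∀ s ∈ closedBall (0 : ι → ℝ) δ, 1 / 8 < φ (θ + toTorus s)
  · rw [← integral_const_mul]
    refine setIntegral_mono_on (integrableOn_closedBall_translate (hf.pow m) θ δ)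
      ((integrableOn_closedBall_translate hfg θ δ).const_mul _) measurableSet_closedBall
      fun s hs => ?_
    have h_exp : f (θ + toTorus s) ≤ Real.exp (-(1 / 64)) :=
      (hfφ _).trans (Real.exp_le_exp.2 (by linarith [h_far s hs]))
    refine (pow_le_of_le_exp_neg (hf₀ _) h_exp hm (Fintype.card ι)).trans ?_
    have h_const := le_comparisonConst_left (Fintype.card ι) lam hδ.le
    have h_add := le_add_of_nonneg_right (a := f (θ + toTorus s) ^ 2) (hg₀ (θ + toTorus s))
    gcongr
  · push Not at h_far
    obtain ⟨t, ht, hφt⟩ := h_far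
    have h_mass := hφ.le_setIntegral hδ.le hfg
      (fun θ hθ => (hgφ θ hθ).trans (le_add_of_nonneg_left (sq_nonneg _))) ht hφt
    have h_const := le_comparisonConst_right (Fintype.card ι) lam δ
    have h_sqrt : √(Real.pi / (lam * m / 32)) = √(32 * Real.pi / lam) / √m := by
      rw [← Real.sqrt_div' _ hm'.le]
      congr 1
      field_simp
    calc _ ≤ √(Real.pi / (lam * m / 32)) ^ Fintype.card ι :=
          hφ.setIntegral_pow_le hlam hδ.le hf hf₀ hfφ (by positivity) θ
      _ = 4 * (√(32 * Real.pi / lam) / (2 * δ)) ^ Fintype.card ι / √m ^ Fintype.card ι *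
            (1 / 4 * (2 * δ) ^ Fintype.card ι) := by
          rw [h_sqrt, div_pow, div_pow]
          field_simp
      _ ≤ _ := by
          gcongr
          exact h_mass

theorem integral_pow_le (hφ : IsQuadraticGap φ lam δ) (hlam : 0 < lam) (hδ : 0 < δ)
    (hf : Continuous f) (hf₀ : ∀ θ, 0 ≤ f θ) (hfφ : ∀ θ, f θ ≤ Real.exp (-(φ θ / 8)))
    (hg : Continuous g) (hg₀ : ∀ θ, 0 ≤ g θ) (hgφ : ∀ θ, φ θ ≤ 1 / 2 → 1 / 4 ≤ g θ)
    {m : ℕ} (hm : 2 ≤ m) :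
    ∫ θ, f θ ^ m ≤ comparisonConst (Fintype.card ι) lam δ / √m ^ Fintype.card ι *
      ∫ θ, (f θ ^ 2 + g θ) :=
  integral_le_of_forall_setIntegral_translate_le (hf.pow m) ((hf.pow 2).add hg)
    (measure_closedBall_pos _ _ hδ).ne' measure_closedBall_lt_top.ne
    (hφ.setIntegral_pow_le_setIntegral hlam hδ hf hf₀ hfφ hg hg₀ hgφ hm)

end IsQuadraticGap

end LocalComparison

section SpreadOut

open Finset MeasureTheory UnitAddTorus

variable {ι : Type*} [Fintype ι]

/-- Symmetric probability weights `J` on the finite set `S` that are spread out at scale `R`: their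
range is at most `R`, their density at most `b / R^d`, and their covariance matrix at least
`κ R²`. -/
structure IsSpreadOut (S : Finset (ι → ℤ)) (J : (ι → ℤ) → ℝ) (R κ b : ℝ) : Prop where
  scale_pos : 0 < R
  nonneg : ∀ y, 0 ≤ J y
  eq_zero : ∀ y, y ∉ S → J y = 0
  sum_eq_one : ∑ y ∈ S, J y = 1
  neg_mem : ∀ y ∈ S, -y ∈ S
  map_neg : ∀ y, J (-y) = J y
  abs_le : ∀ y ∈ S, ∀ i, |(y i : ℝ)| ≤ R
  le_variance : ∀ s : ι → ℝ, κ * R ^ 2 * ∑ i, s i ^ 2 ≤ ∑ y ∈ S, J y * (∑ i, y i * s i) ^ 2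
  le_density : ∀ y, J y ≤ b / R ^ Fintype.card ι

theorem integral_norm_fourierSum_two_nsmul_sq (S : Finset (ι → ℤ)) (w : (ι → ℤ) → ℝ) :
    ∫ θ, ‖fourierSum S w (2 • θ)‖ ^ 2 = ∑ y ∈ S, w y ^ 2 := by
  have h_cont : Continuous fun θ => ‖fourierSum S w θ‖ ^ 2 := continuous_fourierSum.norm.pow 2
  have h_map := integral_map (μ := volume)
    (measurePreserving_two_nsmul (ι := ι)).measurable.aemeasurable h_cont.aestronglyMeasurable
  rw [measurePreserving_two_nsmul.map_eq] at h_map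
  rw [← h_map, integral_norm_fourierSum_sq]

theorem comparisonConst_scale (d : ℕ) (κ : ℝ) {R : ℝ} (hR : 0 < R) :
    comparisonConst d (32 * κ * R ^ 2) (1 / (64 * d * R)) =
      comparisonConst d (32 * κ) (1 / (64 * d)) := by
  have h_sqrt : √(32 * Real.pi / (32 * κ * R ^ 2)) = √(32 * Real.pi / (32 * κ)) / R := by
    rw [← div_div, Real.sqrt_div' _ (sq_nonneg R), Real.sqrt_sq hR.le]
  rw [comparisonConst, comparisonConst, h_sqrt]
  congr 3
  field_simp

/-- The constant in the uniform heat kernel bound for spread-out weights; it does not depend on the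
scale. -/
def heatConst (d : ℕ) (κ b : ℝ) : ℝ := 4 * b * comparisonConst d (32 * κ) (1 / (64 * d))

namespace IsSpreadOut

variable {S : Finset (ι → ℤ)} {J : (ι → ℤ) → ℝ} {R κ b : ℝ}

theorem abs_sum_mul_le (hJ : IsSpreadOut S J R κ b) {y : ι → ℤ} (hy : y ∈ S) (s : ι → ℝ) :
    |∑ i, y i * s i| ≤ Fintype.card ι * R * ‖s‖ := by
  calc |∑ i, y i * s i| ≤ ∑ i, |y i * s i| := abs_sum_le_sum_abs _ _
    _ ≤ ∑ _i : ι, R * ‖s‖ := by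
        refine sum_le_sum fun i _ => ?_
        rw [abs_mul]
        exact mul_le_mul (hJ.abs_le y hy i) (norm_le_pi_norm s i) (abs_nonneg _) hJ.scale_pos.le
    _ = Fintype.card ι * R * ‖s‖ := by rw [sum_const, card_univ, nsmul_eq_mul, mul_assoc]

theorem abs_sum_mul_two_nsmul_le [Nonempty ι] (hJ : IsSpreadOut S J R κ b) {y : ι → ℤ}
    (hy : y ∈ S) {s : ι → ℝ} (hs : ‖s‖ ≤ 2 * (1 / (64 * Fintype.card ι * R))) :
    |∑ i, y i * (2 • s) i| ≤ 1 / 16 := by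
  have hR := hJ.scale_pos
  calc |∑ i, y i * (2 • s) i| ≤ Fintype.card ι * R * ‖2 • s‖ := hJ.abs_sum_mul_le hy _
    _ ≤ Fintype.card ι * R * (2 * (2 * (1 / (64 * Fintype.card ι * R)))) := by
        gcongr
        calc ‖2 • s‖ ≤ 2 * ‖s‖ := norm_nsmul_le
          _ ≤ _ := by gcongr
    _ = 1 / 16 := by
        field_simp
        norm_num

theorem isQuadraticGap [Nonempty ι] (hJ : IsSpreadOut S J R κ b) :
    IsQuadraticGap (fun θ => fourierGap S J (2 • θ)) (32 * κ * R ^ 2)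
      (1 / (64 * Fintype.card ι * R)) where
  continuous := continuous_fourierGap.comp (continuous_const_smul 2)
  sub_le θ η := by
    rw [smul_sub]
    exact fourierGap_sub_le (fun y _ => hJ.nonneg y) _ _
  quadratic_le s hs := by
    rw [two_nsmul_toTorus]
    have h_gap := le_fourierGap_toTorus (fun y _ => hJ.nonneg y) fun y hy =>
      (hJ.abs_sum_mul_two_nsmul_le hy hs).trans (by norm_num)
    have h_var := hJ.le_variance (2 • s)
    have h_scale : ∑ i, (2 • s) i ^ 2 = 4 * ∑ i, s i ^ 2 := by
      rw [mul_sum]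
      exact sum_congr rfl fun i _ => by simp; ring
    rw [h_scale] at h_var
    linarith
  le_eighth s hs := by
    rw [two_nsmul_toTorus]
    refine (fourierGap_toTorus_le (fun y _ => hJ.nonneg y) hJ.sum_eq_one fun y hy =>
      hJ.abs_sum_mul_two_nsmul_le hy hs).trans ?_
    nlinarith [Real.pi_pos, Real.pi_lt_four]

theorem quarter_le_norm_fourierSum_sq (hJ : IsSpreadOut S J R κ b) {θ : UnitAddTorus ι}
    (hθ : fourierGap S J θ ≤ 1 / 2) : 1 / 4 ≤ ‖fourierSum S J θ‖ ^ 2 := by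
  have h_re : 1 / 2 ≤ ‖fourierSum S J θ‖ := by
    refine le_trans ?_ (Complex.re_le_norm _)
    rw [re_fourierSum, hJ.sum_eq_one]
    linarith
  nlinarith

theorem sum_expTilt_sq_le (hJ : IsSpreadOut S J R κ b) {L : (ι → ℤ) →+ ℝ} {ρ : ℝ}
    (hL : ∀ y ∈ S, |L y| ≤ ρ) :
    ∑ y ∈ S, expTilt L J y ^ 2 ≤ Real.exp (2 * ρ) * (b / R ^ Fintype.card ι) :=
  Blackbox.sum_expTilt_sq_le (fun y _ => hJ.nonneg y) hJ.sum_eq_one (fun y _ => hJ.le_density y) hL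

theorem sum_sq_le (hJ : IsSpreadOut S J R κ b) :
    ∑ y ∈ S, J y ^ 2 ≤ b / R ^ Fintype.card ι := by
  simpa [expTilt] using hJ.sum_expTilt_sq_le (L := 0) (ρ := 0) (by simp)

theorem integral_norm_fourierSum_expTilt_sq_add_le (hJ : IsSpreadOut S J R κ b)
    {L : (ι → ℤ) →+ ℝ} {ρ : ℝ} (hρ : ρ ≤ 1 / 2) (hL : ∀ y ∈ S, |L y| ≤ ρ) :
    ∫ θ, ((Real.exp (-ρ ^ 2) * ‖fourierSum S (expTilt L J) θ‖) ^ 2 +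
      ‖fourierSum S J (2 • θ)‖ ^ 2) ≤ 4 * (b / R ^ Fintype.card ι) := by
  have h_density : 0 ≤ b / R ^ Fintype.card ι := (hJ.nonneg 0).trans (hJ.le_density 0)
  have h_exp : Real.exp (-ρ ^ 2) ^ 2 * Real.exp (2 * ρ) ≤ 3 := by
    calc Real.exp (-ρ ^ 2) ^ 2 * Real.exp (2 * ρ) ≤ 1 ^ 2 * Real.exp 1 := by
          gcongr
          · exact Real.exp_le_one_iff.2 (by nlinarith)
          · linarith
      _ ≤ 3 := by linarith [Real.exp_one_lt_d9]
  have h_cont : Continuous fun θ => ‖fourierSum S (expTilt L J) θ‖ ^ 2 :=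
    continuous_fourierSum.norm.pow 2
  have h_cont' : Continuous fun θ => ‖fourierSum S J (2 • θ)‖ ^ 2 :=
    (continuous_fourierSum.comp (continuous_const_smul 2)).norm.pow 2
  simp_rw [mul_pow]
  rw [integral_add ((integrable_of_continuous h_cont).const_mul _)
    (integrable_of_continuous h_cont'), integral_const_mul, integral_norm_fourierSum_sq,
    integral_norm_fourierSum_two_nsmul_sq]
  have h_tilt := mul_le_mul_of_nonneg_left (hJ.sum_expTilt_sq_le hL)
    (sq_nonneg (Real.exp (-ρ ^ 2)))
  nlinarith [hJ.sum_sq_le]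

theorem integral_norm_fourierSum_expTilt_pow_le [Nonempty ι] (hJ : IsSpreadOut S J R κ b)
    (hκ : 0 < κ) {L : (ι → ℤ) →+ ℝ} {ρ : ℝ} (hρ : |ρ| ≤ 1 / 2) (hL : ∀ y ∈ S, |L y| ≤ ρ)
    {m : ℕ} (hm : 2 ≤ m) :
    ∫ θ, ‖fourierSum S (expTilt L J) θ‖ ^ m ≤
      Real.exp (m * ρ ^ 2) * (heatConst (Fintype.card ι) κ b / (R * √m) ^ Fintype.card ι) := by
  have hR := hJ.scale_pos
  have h_bound : ∀ θ, Real.exp (-ρ ^ 2) * ‖fourierSum S (expTilt L J) θ‖ ≤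
      Real.exp (-(fourierGap S J (2 • θ) / 8)) := by
    intro θ
    calc _ ≤ Real.exp (-ρ ^ 2) * Real.exp (ρ ^ 2 - fourierGap S J (2 • θ) / 8) := by
          gcongr
          exact norm_fourierSum_expTilt_le (fun y _ => hJ.nonneg y) hJ.sum_eq_one hJ.neg_mem
            hJ.map_neg hρ hL θ
      _ = _ := by
          rw [← Real.exp_add]
          ring_nf
  have h_pow := hJ.isQuadraticGap.integral_pow_le (by positivity) (by positivity)
    (continuous_const.mul continuous_fourierSum.norm)
    (fun θ => mul_nonneg (Real.exp_pos _).le (norm_nonneg _)) h_bound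
    ((continuous_fourierSum.comp (continuous_const_smul 2)).norm.pow 2)
    (fun θ => sq_nonneg _) (fun θ => hJ.quarter_le_norm_fourierSum_sq) hm
  rw [comparisonConst_scale _ _ hR] at h_pow
  have h_const : 0 < comparisonConst (Fintype.card ι) (32 * κ) (1 / (64 * Fintype.card ι)) :=
    comparisonConst_pos _ _ (by positivity)
  have h_exp : Real.exp (m * ρ ^ 2) * Real.exp (-ρ ^ 2) ^ m = 1 := by
    rw [← Real.exp_nat_mul, ← Real.exp_add, Real.exp_eq_one_iff]
    ring
  calc ∫ θ, ‖fourierSum S (expTilt L J) θ‖ ^ m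
      = Real.exp (m * ρ ^ 2) *
          ∫ θ, (Real.exp (-ρ ^ 2) * ‖fourierSum S (expTilt L J) θ‖) ^ m := by
        simp_rw [mul_pow]
        rw [integral_const_mul, ← mul_assoc, h_exp, one_mul]
    _ ≤ Real.exp (m * ρ ^ 2) *
          (comparisonConst (Fintype.card ι) (32 * κ) (1 / (64 * Fintype.card ι)) /
            √m ^ Fintype.card ι * (4 * (b / R ^ Fintype.card ι))) := by
        gcongr
        refine h_pow.trans ?_
        gcongr
        exact hJ.integral_norm_fourierSum_expTilt_sq_add_le (le_of_abs_le hρ) hL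
    _ = _ := by
        rw [heatConst, mul_pow]
        ring

end IsSpreadOut

end SpreadOut

section Walk

open Finset MeasureTheory UnitAddTorus

variable {d : ℕ} {S : Finset (Fin d → ℤ)} {w J : (Fin d → ℤ) → ℝ}

theorem latIter_succ (J : (Fin d → ℤ) → ℝ) (n : ℕ) (x : Fin d → ℤ) :
    latIter J (n + 1) x = ∑' y, J y * latIter J n (x - y) := rfl

theorem latIter_nonneg (hJ : ∀ y, 0 ≤ J y) (n : ℕ) (x : Fin d → ℤ) : 0 ≤ latIter J n x := by
  induction n generalizing x with
  | zero =>
    rw [latIter]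
    positivity
  | succ n ih => exact tsum_nonneg fun y => mul_nonneg (hJ y) (ih _)

theorem latIter_one (w : (Fin d → ℤ) → ℝ) (x : Fin d → ℤ) : latIter w 1 x = w x := by
  rw [latIter_succ, tsum_eq_single x fun y hy => by simp [latIter, sub_eq_zero, hy.symm]]
  simp [latIter]

theorem latIter_eq_zero {R : ℝ} {i : Fin d} (hJ : ∀ y, R < |(y i : ℝ)| → J y = 0) {n : ℕ}
    {x : Fin d → ℤ} (hx : n * R < |(x i : ℝ)|) : latIter J n x = 0 := by
  induction n generalizing x with
  | zero =>
    have h_ne : x ≠ 0 := by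
      rintro rfl
      simp at hx
    simp [latIter, h_ne]
  | succ n ih =>
    rw [latIter_succ]
    refine (tsum_congr fun y => ?_).trans tsum_zero
    rcases lt_or_ge R |(y i : ℝ)| with hy | hy
    · rw [hJ y hy, zero_mul]
    · have h_abs := abs_sub_abs_le_abs_sub (x i : ℝ) (y i)
      rw [ih (by push_cast [Pi.sub_apply] at hx ⊢; linarith), mul_zero]

theorem latIter_expTilt (L : (Fin d → ℤ) →+ ℝ) (J : (Fin d → ℤ) → ℝ) (n : ℕ) (x : Fin d → ℤ) :
    latIter (expTilt L J) n x = Real.exp (L x) * latIter J n x := by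
  induction n generalizing x with
  | zero => by_cases hx : x = 0 <;> simp [latIter, hx]
  | succ n ih =>
    rw [latIter_succ, latIter_succ, ← tsum_mul_left]
    refine tsum_congr fun y => ?_
    have h_exp : Real.exp (L x) = Real.exp (L y) * Real.exp (L (x - y)) := by
      rw [← Real.exp_add, ← map_add, add_sub_cancel]
    rw [ih, expTilt, h_exp]
    ring

theorem ofReal_latIter_eq_integral (hw : ∀ y, y ∉ S → w y = 0) (n : ℕ) (x : Fin d → ℤ) :
    (latIter w n x : ℂ) = ∫ θ, fourierSum S w θ ^ n * mFourier (-x) θ := by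
  induction n generalizing x with
  | zero =>
    simp only [latIter, pow_zero, one_mul, integral_mFourier, neg_eq_zero]
    split_ifs <;> simp
  | succ n ih =>
    have h_int : ∀ y, Integrable fun θ : UnitAddTorus (Fin d) =>
        (w y : ℂ) * (fourierSum S w θ ^ n * mFourier (-(x - y)) θ) := fun y =>
      (integrable_of_continuous
        ((continuous_fourierSum.pow n).mul (mFourier _).continuous)).const_mul _
    have h_expand : ∀ θ, fourierSum S w θ ^ (n + 1) * mFourier (-x) θ =
        ∑ y ∈ S, (w y : ℂ) * (fourierSum S w θ ^ n * mFourier (-(x - y)) θ) := by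
      intro θ
      rw [pow_succ, mul_right_comm, fourierSum, mul_sum]
      refine sum_congr rfl fun y _ => ?_
      rw [neg_sub, sub_eq_add_neg, mFourier_add]
      ring
    rw [latIter_succ, tsum_eq_sum fun y hy => by rw [hw y hy, zero_mul]]
    simp_rw [h_expand]
    rw [integral_finsetSum _ fun y _ => h_int y]
    simp only [Complex.ofReal_sum, Complex.ofReal_mul, ih, integral_const_mul]

theorem abs_latIter_le_integral (hw : ∀ y, y ∉ S → w y = 0) (n : ℕ) (x : Fin d → ℤ) :
    |latIter w n x| ≤ ∫ θ, ‖fourierSum S w θ‖ ^ n := by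
  rw [← Real.norm_eq_abs, ← Complex.norm_real, ofReal_latIter_eq_integral hw]
  refine (norm_integral_le_integral_norm _).trans_eq (integral_congr_ae (.of_forall fun θ => ?_))
  simp only [norm_mul, norm_pow, norm_mFourier_apply, mul_one]

end Walk

section HeatKernel

open Finset

/-- The linear form `y ↦ a y_i` on the lattice. -/
def coordForm {ι : Type*} (i : ι) (a : ℝ) : (ι → ℤ) →+ ℝ :=
  (AddMonoidHom.mulLeft a).comp ((Int.castAddHom ℝ).comp (Pi.evalAddMonoidHom _ i))

theorem coordForm_apply {ι : Type*} (i : ι) (a : ℝ) (y : ι → ℤ) : coordForm i a y = a * y i := rfl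

theorem heatConst_pos (d : ℕ) (κ : ℝ) {b : ℝ} (hb : 0 < b) : 0 < heatConst d κ b := by
  have h_const := comparisonConst_pos d (32 * κ) (δ := 1 / (64 * d)) (by positivity)
  rw [heatConst]
  positivity

namespace IsSpreadOut

variable {d : ℕ} {S : Finset (Fin d → ℤ)} {J : (Fin d → ℤ) → ℝ} {R κ b : ℝ}

theorem density_pos (hJ : IsSpreadOut S J R κ b) : 0 < b := by
  obtain ⟨y, _, hy⟩ := exists_ne_zero_of_sum_ne_zero (hJ.sum_eq_one.trans_ne one_ne_zero)
  have h_pos := ((hJ.nonneg y).lt_of_ne' hy).trans_le (hJ.le_density y)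
  exact (div_pos_iff_of_pos_right (pow_pos hJ.scale_pos _)).1 h_pos

theorem latIter_le_of_abs_le [NeZero d] (hJ : IsSpreadOut S J R κ b) (hκ : 0 < κ) {m : ℕ}
    (hm : 2 ≤ m) {x : Fin d → ℤ} {i : Fin d} (hx : |(x i : ℝ)| ≤ m * R) :
    latIter J m x ≤ heatConst d κ b / (R * √m) ^ d * Real.exp (-((x i / R) ^ 2 / (4 * m))) := by
  have hR := hJ.scale_pos
  -- `a = x_i / (2 m R²)` minimises `m (a R)² - a x_i`, the exponent left after undoing the tilt.
  set L := coordForm i (x i / (2 * m * R ^ 2))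
  set ρ := |(x i : ℝ)| / (2 * m * R)
  have hρ : |ρ| ≤ 1 / 2 := by
    rw [abs_of_nonneg (by positivity), div_le_div_iff₀ (by positivity) two_pos]
    linarith
  have hL : ∀ y ∈ S, |L y| ≤ ρ := by
    intro y hy
    calc |L y| = ρ * (|(y i : ℝ)| / R) := by
          rw [coordForm_apply, abs_mul, abs_div, abs_of_pos (by positivity : 0 < 2 * m * R ^ 2)]
          simp only [ρ]
          field_simp
      _ ≤ ρ * 1 := by
          gcongr
          exact (div_le_one hR).2 (hJ.abs_le y hy i)
      _ = ρ := mul_one ρ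
  have h_tilt := (le_abs_self _).trans (abs_latIter_le_integral (S := S) (w := expTilt L J)
    (fun y hy => by rw [expTilt, hJ.eq_zero y hy, zero_mul]) m x)
  rw [latIter_expTilt] at h_tilt
  have h_int := hJ.integral_norm_fourierSum_expTilt_pow_le hκ hρ hL hm
  rw [Fintype.card_fin] at h_int
  have h_exp : m * ρ ^ 2 = L x - (x i / R) ^ 2 / (4 * m) := by
    rw [coordForm_apply, div_pow, sq_abs]
    field_simp
    ring
  rw [h_exp, sub_eq_add_neg, Real.exp_add, mul_assoc] at h_int
  rw [mul_comm (heatConst d κ b / _)]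
  exact le_of_mul_le_mul_left (h_tilt.trans h_int) (Real.exp_pos _)

theorem le_gaussian (hJ : IsSpreadOut S J R κ b) {x : Fin d → ℤ} {i : Fin d}
    (hx : |(x i : ℝ)| ≤ R) :
    J x ≤ heatConst d κ b / R ^ d * Real.exp (-((x i / R) ^ 2 / 4)) := by
  have hR := hJ.scale_pos
  have h_density := hJ.le_density x
  rw [Fintype.card_fin] at h_density
  have h_pos : 0 ≤ b / R ^ d := (hJ.nonneg x).trans h_density
  have h_sq : (x i / R) ^ 2 ≤ 1 := by
    rw [sq_le_one_iff_abs_le_one, abs_div, abs_of_pos hR]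
    exact (div_le_one hR).2 hx
  have h_exp := Real.one_sub_le_exp_neg ((x i / R) ^ 2 / 4)
  have h_const := one_le_comparisonConst d (32 * κ) (δ := 1 / (64 * d)) (by positivity)
  calc J x ≤ b / R ^ d * (4 * (1 * (1 - 1 / 4))) := by linarith
    _ ≤ b / R ^ d * (4 * (comparisonConst d (32 * κ) (1 / (64 * d)) *
          Real.exp (-((x i / R) ^ 2 / 4)))) := by
        gcongr
        linarith
    _ = _ := by
        rw [heatConst]
        ring

theorem latIter_le_gaussian [NeZero d] (hJ : IsSpreadOut S J R κ b) (hκ : 0 < κ) {m : ℕ}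
    (hm : 1 ≤ m) (x : Fin d → ℤ) (i : Fin d) :
    latIter J m x ≤ heatConst d κ b / (R * √m) ^ d * Real.exp (-((x i / R) ^ 2 / (4 * m))) := by
  rcases le_or_gt |(x i : ℝ)| (m * R) with hx | hx
  · rcases hm.eq_or_lt with rfl | hm
    · have h_gauss := hJ.le_gaussian (by simpa using hx)
      simpa [latIter_one] using h_gauss
    · exact hJ.latIter_le_of_abs_le hκ hm hx
  · have h_const := heatConst_pos d κ hJ.density_pos
    have hR := hJ.scale_pos
    rw [latIter_eq_zero (fun y hy => hJ.eq_zero y fun hyS => (hJ.abs_le y hyS i).not_gt hy) hx]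
    positivity

end IsSpreadOut

end HeatKernel

section Green

open Finset

theorem inv_sqrt_pow_three_le {v : ℝ} (hv : 1 ≤ v) :
    1 / √v ^ 3 ≤ 4 * (1 / √v - 1 / √(v + 1)) := by
  have ha : 1 ≤ √v := Real.one_le_sqrt.2 hv
  have hab : √v ≤ √(v + 1) := Real.sqrt_le_sqrt (by linarith)
  have hb_sq : √(v + 1) ^ 2 = √v ^ 2 + 1 := by
    rw [Real.sq_sqrt (by linarith), Real.sq_sqrt (by linarith)]
  generalize √v = a at *
  generalize √(v + 1) = b at *
  have hb : b ≤ 3 / 2 * a := le_of_sq_le_sq (by nlinarith) (by positivity)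
  have h_diff : 1 / a - 1 / b = 1 / (a * b * (a + b)) := by
    have ha₀ : a ≠ 0 := by positivity
    have hb₀ : b ≠ 0 := (by linarith : (0 : ℝ) < b).ne'
    have hab₀ : a + b ≠ 0 := by linarith
    field_simp
    linear_combination hb_sq
  have hb₀ : 0 < b := by linarith
  have h_prod : a * b * (a + b) ≤ 4 * a ^ 3 := by
    calc a * b * (a + b) ≤ a * (3 / 2 * a) * (a + 3 / 2 * a) := by gcongr
      _ ≤ 4 * a ^ 3 := by linarith [pow_pos (by linarith : 0 < a) 3]
  rw [h_diff, mul_one_div, div_le_div_iff₀ (by positivity) (by positivity)]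
  linarith

/-- The constant lost when summing the Gaussian bounds `n^{-d/2} e^{-t²/(4n)}` over `n ≥ 1`. -/
def greenConst (d : ℕ) : ℝ := 4 * (2 * (8 ^ d * d.factorial))

theorem greenConst_pos (d : ℕ) : 0 < greenConst d := by
  rw [greenConst]
  positivity

theorem inv_sqrt_pow_mul_exp_le {n : ℝ} (hn : 0 < n) (t : ℝ) (d : ℕ) :
    1 / √n ^ d * Real.exp (-(t ^ 2 / (8 * n))) ≤
      2 * (8 ^ d * d.factorial) / √(n + t ^ 2) ^ d := by
  have h_scale : n + t ^ 2 = n * (1 + t ^ 2 / n) := by field_simp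
  have h_two : Real.exp (1 / 8) ≤ 2 := by
    refine (Real.le_log_iff_exp_le two_pos).1 ?_
    linarith [Real.log_two_gt_d9]
  have h_ratio : 0 ≤ t ^ 2 / n := by positivity
  have h_pow := sqrt_pow_le_mul_exp (by linarith : 1 ≤ 1 + t ^ 2 / n) (by norm_num : (0 : ℝ) < 8) d
  rw [h_scale, Real.sqrt_mul hn.le, mul_pow, Real.exp_neg, ← one_div, one_div_mul_one_div,
    div_le_div_iff₀ (by positivity) (by positivity), one_mul]
  calc √n ^ d * √(1 + t ^ 2 / n) ^ d
      ≤ √n ^ d * (8 ^ d * d.factorial * Real.exp ((1 + t ^ 2 / n) / 8)) := by gcongr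
    _ = √n ^ d * (8 ^ d * d.factorial * (Real.exp (1 / 8) * Real.exp (t ^ 2 / (8 * n)))) := by
        rw [← Real.exp_add]
        congr 3
        field_simp
    _ ≤ √n ^ d * (8 ^ d * d.factorial * (2 * Real.exp (t ^ 2 / (8 * n)))) := by gcongr
    _ = _ := by ring

theorem inv_sqrt_pow_mul_exp_le_sub {d : ℕ} (hd : 3 ≤ d) {n t : ℝ} (hn : 1 ≤ n) :
    1 / √n ^ d * Real.exp (-(t ^ 2 / (8 * n))) ≤
      greenConst d / max 1 t ^ (d - 3) * (1 / √(n + t ^ 2) - 1 / √(n + 1 + t ^ 2)) := by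
  have hv : 1 ≤ n + t ^ 2 := by nlinarith [sq_nonneg t]
  have h_max : max 1 t ≤ √(n + t ^ 2) :=
    max_le (Real.one_le_sqrt.2 hv) (Real.le_sqrt_of_sq_le (by linarith))
  obtain ⟨k, rfl⟩ := Nat.exists_eq_add_of_le' hd
  calc 1 / √n ^ (k + 3) * Real.exp (-(t ^ 2 / (8 * n)))
      ≤ 2 * (8 ^ (k + 3) * (k + 3).factorial) / √(n + t ^ 2) ^ (k + 3) :=
        inv_sqrt_pow_mul_exp_le (by linarith) t _
    _ = 2 * (8 ^ (k + 3) * (k + 3).factorial) / √(n + t ^ 2) ^ k * (1 / √(n + t ^ 2) ^ 3) := by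
        rw [div_mul_div_comm, mul_one, ← pow_add]
    _ ≤ 2 * (8 ^ (k + 3) * (k + 3).factorial) / max 1 t ^ k *
          (4 * (1 / √(n + t ^ 2) - 1 / √(n + t ^ 2 + 1))) := by
        gcongr
        exact inv_sqrt_pow_three_le hv
    _ = _ := by
        rw [greenConst, add_right_comm n, Nat.add_sub_cancel]
        ring

theorem pow_mul_exp_neg_le {β : ℝ} (hβ : β ∈ Set.Icc 0 1) {n : ℕ} (hn : 0 < n) (t : ℝ) :
    β ^ n * Real.exp (-(t ^ 2 / (4 * n))) ≤
      Real.exp (-(√(1 - β) * t / 2)) * Real.exp (-(t ^ 2 / (8 * n))) := by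
  have h_pow : β ^ n ≤ Real.exp (-(n * (1 - β))) := by
    calc β ^ n ≤ Real.exp (-(1 - β)) ^ n :=
          pow_le_pow_left₀ hβ.1 (by linarith [Real.one_sub_le_exp_neg (1 - β)]) n
      _ = Real.exp (-(n * (1 - β))) := by rw [← Real.exp_nat_mul, mul_neg]
  have h_amgm : √(1 - β) * t / 2 + t ^ 2 / (8 * n) ≤ n * (1 - β) + t ^ 2 / (4 * n) := by
    have h_sq : n * (1 - β) + t ^ 2 / (4 * n) - (√(1 - β) * t / 2 + t ^ 2 / (8 * n)) =
        (n * √(1 - β) - t / 4) ^ 2 / n + t ^ 2 / (16 * n) := by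
      nth_rw 1 [← Real.sq_sqrt (sub_nonneg.2 hβ.2)]
      field_simp
      ring
    rw [← sub_nonneg, h_sq]
    positivity
  calc β ^ n * Real.exp (-(t ^ 2 / (4 * n)))
      ≤ Real.exp (-(n * (1 - β))) * Real.exp (-(t ^ 2 / (4 * n))) := by gcongr
    _ ≤ Real.exp (-(√(1 - β) * t / 2)) * Real.exp (-(t ^ 2 / (8 * n))) := by
        rw [← Real.exp_add, ← Real.exp_add]
        exact Real.exp_le_exp.2 (by linarith)

theorem pow_mul_le_of_le_gaussian {d : ℕ} (hd : 3 ≤ d) {p A t β : ℝ} (hA : 0 ≤ A)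
    (hβ : β ∈ Set.Icc 0 1) {n : ℕ} (hn : 1 ≤ n)
    (hp : p ≤ A / √n ^ d * Real.exp (-(t ^ 2 / (4 * n)))) :
    β ^ n * p ≤ greenConst d * A / max 1 t ^ (d - 3) * Real.exp (-(√(1 - β) * t / 2)) *
      (1 / √(n + t ^ 2) - 1 / √(n + 1 + t ^ 2)) := by
  calc β ^ n * p ≤ β ^ n * (A / √n ^ d * Real.exp (-(t ^ 2 / (4 * n)))) :=
        mul_le_mul_of_nonneg_left hp (pow_nonneg hβ.1 _)
    _ = A / √n ^ d * (β ^ n * Real.exp (-(t ^ 2 / (4 * n)))) := by ring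
    _ ≤ A / √n ^ d * (Real.exp (-(√(1 - β) * t / 2)) * Real.exp (-(t ^ 2 / (8 * n)))) :=
        mul_le_mul_of_nonneg_left (pow_mul_exp_neg_le hβ hn t) (by positivity)
    _ = A * Real.exp (-(√(1 - β) * t / 2)) * (1 / √n ^ d * Real.exp (-(t ^ 2 / (8 * n)))) := by
        ring
    _ ≤ A * Real.exp (-(√(1 - β) * t / 2)) * (greenConst d / max 1 t ^ (d - 3) *
          (1 / √(n + t ^ 2) - 1 / √(n + 1 + t ^ 2))) := by
        exact mul_le_mul_of_nonneg_left
          (inv_sqrt_pow_mul_exp_le_sub hd (Nat.one_le_cast.2 hn)) (by positivity)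
    _ = _ := by ring

theorem sum_pow_mul_le_of_le_gaussian {d : ℕ} (hd : 3 ≤ d) {P : ℕ → ℝ} {A t β : ℝ} (hA : 0 ≤ A)
    (hβ : β ∈ Set.Icc 0 1)
    (hP : ∀ n, 1 ≤ n → P n ≤ A / √n ^ d * Real.exp (-(t ^ 2 / (4 * n)))) (N : ℕ) :
    ∑ n ∈ range N, β ^ (n + 1) * P (n + 1) ≤
      greenConst d * A / max 1 t ^ (d - 2) * Real.exp (-(√(1 - β) * t / 2)) := by
  set M := max 1 t
  have hM : 0 < M := one_pos.trans_le (le_max_left 1 t)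
  set h : ℕ → ℝ := fun n => 1 / √(n + 1 + t ^ 2)
  set D := Real.exp (-(√(1 - β) * t / 2))
  have h_const : 0 ≤ greenConst d := (greenConst_pos d).le
  have h_term : ∀ n, β ^ (n + 1) * P (n + 1) ≤
      greenConst d * A / M ^ (d - 3) * D * (h n - h (n + 1)) := fun n => by
    simpa [h] using pow_mul_le_of_le_gaussian hd hA hβ n.succ_pos (hP _ n.succ_pos)
  have h_zero : h 0 - h N ≤ 1 / M := by
    have h_sqrt : M ≤ √(1 + t ^ 2) :=
      max_le (Real.one_le_sqrt.2 (by nlinarith)) (Real.le_sqrt_of_sq_le (by linarith))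
    calc h 0 - h N ≤ h 0 := sub_le_self _ (by positivity)
      _ ≤ 1 / M := by
          simp only [h, Nat.cast_zero, zero_add]
          gcongr
  calc ∑ n ∈ range N, β ^ (n + 1) * P (n + 1)
      ≤ ∑ n ∈ range N, greenConst d * A / M ^ (d - 3) * D * (h n - h (n + 1)) :=
        sum_le_sum fun n _ => h_term n
    _ = greenConst d * A / M ^ (d - 3) * D * (h 0 - h N) := by rw [← mul_sum, sum_range_sub']
    _ ≤ greenConst d * A / M ^ (d - 3) * D * (1 / M) := by gcongr
    _ = greenConst d * A / M ^ (d - 2) * D := by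
        rw [show d - 2 = d - 3 + 1 by omega, pow_succ]
        field_simp

theorem latGreen_le_of_sum_le {d : ℕ} {J : (Fin d → ℤ) → ℝ} (hJ : ∀ y, 0 ≤ J y) {β : ℝ}
    (hβ : 0 ≤ β) {x : Fin d → ℤ} {B : ℝ}
    (hB : ∀ N, ∑ n ∈ range N, β ^ (n + 1) * latIter J (n + 1) x ≤ B) :
    latGreen J β x ≤ ENNReal.ofReal ((if x = 0 then 1 else 0) + B) := by
  have h_nonneg : ∀ n, 0 ≤ β ^ n * latIter J n x := fun n =>
    mul_nonneg (pow_nonneg hβ n) (latIter_nonneg hJ n x)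
  refine ENNReal.tsum_le_of_sum_range_le fun N => ?_
  rw [← ENNReal.ofReal_sum_of_nonneg fun n _ => h_nonneg n]
  refine ENNReal.ofReal_le_ofReal ?_
  calc ∑ n ∈ range N, β ^ n * latIter J n x
      ≤ ∑ n ∈ range (N + 1), β ^ n * latIter J n x :=
        sum_le_sum_of_subset_of_nonneg (range_mono N.le_succ) fun n _ _ => h_nonneg n
    _ = (if x = 0 then 1 else 0) + ∑ n ∈ range N, β ^ (n + 1) * latIter J (n + 1) x := by
        rw [sum_range_succ', pow_zero, one_mul, latIter, add_comm]
    _ ≤ (if x = 0 then 1 else 0) + B := by grw [hB N]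

end Green

section Admissible

open Finset

variable {d : ℕ}

theorem abs_le_supNorm (x : Fin d → ℤ) (i : Fin d) : |(x i : ℝ)| ≤ supNorm x := by
  rw [← Int.cast_abs, ← Nat.cast_natAbs, supNorm]
  exact_mod_cast le_sup (f := fun i => (x i).natAbs) (mem_univ i)

theorem exists_abs_eq_supNorm [NeZero d] (x : Fin d → ℤ) : ∃ i, |(x i : ℝ)| = supNorm x := by
  obtain ⟨i, _, hi⟩ := exists_mem_eq_sup univ univ_nonempty fun i => (x i).natAbs
  exact ⟨i, by rw [supNorm, hi, Nat.cast_natAbs, Int.cast_abs]⟩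

theorem sum_support_mul_comp {α : Type*} {J : α → ℝ} {S : Finset α} (hS : ∀ y, y ∈ S ↔ J y ≠ 0)
    (e : Equiv.Perm α) (he : ∀ y, J (e y) = J y) (F : α → ℝ) :
    ∑ y ∈ S, J y * F (e y) = ∑ y ∈ S, J y * F y :=
  sum_equiv e (fun y => by rw [hS, hS, he]) fun y _ => by rw [he]

namespace IsSymmFun

variable {J : (Fin d → ℤ) → ℝ}

theorem comp_perm (hJ : IsSymmFun J) (π : Equiv.Perm (Fin d)) (y : Fin d → ℤ) :
    J (fun k => y (π k)) = J y := by
  simpa using hJ π (fun _ => false) y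

theorem comp_neg (hJ : IsSymmFun J) (y : Fin d → ℤ) : J (-y) = J y := by
  rw [← hJ 1 (fun _ => true) y]
  congr 1
  ext k
  simp

theorem comp_flip (hJ : IsSymmFun J) (i : Fin d) (y : Fin d → ℤ) :
    J (fun k => (if k = i then -1 else 1) * y k) = J y := by
  simpa using hJ 1 (fun k => decide (k = i)) y

variable {S : Finset (Fin d → ℤ)}

theorem sum_mul_coord_mul_coord_eq_zero (hJ : IsSymmFun J) (hS : ∀ y, y ∈ S ↔ J y ≠ 0)
    {i j : Fin d} (hij : i ≠ j) : ∑ y ∈ S, J y * (y i * y j : ℝ) = 0 := by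
  have h_invol : Function.Involutive
      fun (y : Fin d → ℤ) k => (if k = i then -1 else 1) * y k := by
    intro y
    ext k
    by_cases hk : k = i <;> simp [hk]
  have h_flip := sum_support_mul_comp hS h_invol.toPerm (hJ.comp_flip i)
    fun y => (y i * y j : ℝ)
  simp only [Function.Involutive.coe_toPerm, if_true, if_neg hij.symm] at h_flip
  push_cast at h_flip
  simp only [one_mul, neg_mul, mul_neg, sum_neg_distrib] at h_flip
  linarith

theorem sum_mul_coord_sq_eq (hJ : IsSymmFun J) (hS : ∀ y, y ∈ S ↔ J y ≠ 0) (i j : Fin d) :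
    ∑ y ∈ S, J y * (y i : ℝ) ^ 2 = ∑ y ∈ S, J y * (y j : ℝ) ^ 2 := by
  have h_invol : Function.Involutive fun (y : Fin d → ℤ) k => y (Equiv.swap i j k) := by
    intro y
    ext k
    simp
  rw [← sum_support_mul_comp hS h_invol.toPerm (hJ.comp_perm (Equiv.swap i j))
    fun y => (y i : ℝ) ^ 2]
  simp

theorem card_mul_sum_mul_coord_sq (hJ : IsSymmFun J) (hS : ∀ y, y ∈ S ↔ J y ≠ 0) (i : Fin d) :
    d * ∑ y ∈ S, J y * (y i : ℝ) ^ 2 = ∑ y ∈ S, J y * sqNorm y := by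
  simp_rw [sqNorm, mul_sum]
  rw [sum_comm, sum_congr rfl fun j _ => hJ.sum_mul_coord_sq_eq hS j i]
  simp [mul_sum]

theorem card_mul_sum_mul_linear_sq (hJ : IsSymmFun J) (hS : ∀ y, y ∈ S ↔ J y ≠ 0)
    (s : Fin d → ℝ) :
    d * ∑ y ∈ S, J y * (∑ i, y i * s i) ^ 2 = (∑ y ∈ S, J y * sqNorm y) * ∑ i, s i ^ 2 := by
  have h_cov : ∀ i j, ∑ y ∈ S, J y * (y i * s i * (y j * s j)) =
      if i = j then (∑ y ∈ S, J y * (y i : ℝ) ^ 2) * s i ^ 2 else 0 := by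
    intro i j
    calc ∑ y ∈ S, J y * (y i * s i * (y j * s j))
        = (∑ y ∈ S, J y * (y i * y j : ℝ)) * (s i * s j) := by
          rw [sum_mul]
          exact sum_congr rfl fun y _ => by ring
      _ = _ := by
          split_ifs with hij
          · subst hij
            simp only [← pow_two]
          · rw [hJ.sum_mul_coord_mul_coord_eq_zero hS hij, zero_mul]
  calc d * ∑ y ∈ S, J y * (∑ i, y i * s i) ^ 2
      = d * ∑ i, ∑ j, ∑ y ∈ S, J y * (y i * s i * (y j * s j)) := by
        simp_rw [pow_two, sum_mul_sum, mul_sum]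
        rw [sum_comm]
        simp_rw [sum_comm (s := S)]
    _ = ∑ i, d * (∑ y ∈ S, J y * (y i : ℝ) ^ 2) * s i ^ 2 := by
        simp only [h_cov, sum_ite_eq, mem_univ, if_true]
        rw [mul_sum]
        exact sum_congr rfl fun i _ => (mul_assoc _ _ _).symm
    _ = _ := by
        simp only [hJ.card_mul_sum_mul_coord_sq hS, mul_sum]

end IsSymmFun

namespace AdmissibleKernel

variable {c₀ : ℝ}

theorem finite_support (K : AdmissibleKernel d c₀) : (Function.support K.J).Finite := by
  refine (Set.finite_Icc (fun _ => -⌈K.R⌉) fun _ => ⌈K.R⌉).subset fun y hy => ?_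
  have h_abs : ∀ i, |y i| ≤ ⌈K.R⌉ := fun i => by
    have h_real := (abs_le_supNorm y i).trans
      ((K.range_le y ((K.nonneg y).lt_of_ne' hy)).trans (Int.le_ceil _))
    exact_mod_cast h_real
  exact ⟨fun i => neg_le_of_abs_le (h_abs i), fun i => le_of_abs_le (h_abs i)⟩

/-- The finite set of steps of positive probability. -/
def steps (K : AdmissibleKernel d c₀) : Finset (Fin d → ℤ) := K.finite_support.toFinset

theorem mem_steps (K : AdmissibleKernel d c₀) (y : Fin d → ℤ) : y ∈ K.steps ↔ K.J y ≠ 0 := by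
  simp [steps]

theorem supNorm_le (K : AdmissibleKernel d c₀) {y : Fin d → ℤ} (hy : y ∈ K.steps) :
    supNorm y ≤ K.R :=
  K.range_le y ((K.nonneg y).lt_of_ne' ((K.mem_steps y).1 hy))

theorem R_pos (K : AdmissibleKernel d c₀) : 0 < K.R := one_pos.trans_le K.R_ge_one

theorem sum_steps (K : AdmissibleKernel d c₀) : ∑ y ∈ K.steps, K.J y = 1 := by
  rw [← K.norm_one, tsum_eq_sum fun y hy => not_not.1 (mt (K.mem_steps y).2 hy)]

theorem sigma_sq (K : AdmissibleKernel d c₀) :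
    K.sigma ^ 2 = ∑ y ∈ K.steps, K.J y * sqNorm y := by
  have h_nonneg : ∀ y, 0 ≤ sqNorm y * K.J y := fun y =>
    mul_nonneg (sum_nonneg fun i _ => sq_nonneg (y i : ℝ)) (K.nonneg y)
  rw [sigma, Real.sq_sqrt (tsum_nonneg h_nonneg),
    tsum_eq_sum fun y hy => by rw [not_not.1 (mt (K.mem_steps y).2 hy), mul_zero]]
  exact sum_congr rfl fun y _ => mul_comm _ _

theorem sigma_pos (K : AdmissibleKernel d c₀) (hc₀ : 0 < c₀) : 0 < K.sigma :=
  (mul_pos hc₀ K.R_pos).trans_le K.sigma_lower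

theorem sigma_le (K : AdmissibleKernel d c₀) : K.sigma ≤ d * K.R := by
  have hR := K.R_pos
  have h_sqNorm : ∀ y ∈ K.steps, sqNorm y ≤ d * K.R ^ 2 := by
    intro y hy
    calc sqNorm y ≤ ∑ _i : Fin d, K.R ^ 2 := by
          refine sum_le_sum fun i _ => ?_
          rw [← sq_abs]
          exact pow_le_pow_left₀ (abs_nonneg _) ((abs_le_supNorm y i).trans (K.supNorm_le hy)) 2
      _ = d * K.R ^ 2 := by simp
  refine le_of_sq_le_sq ?_ (by positivity)
  calc K.sigma ^ 2 = ∑ y ∈ K.steps, K.J y * sqNorm y := K.sigma_sq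
    _ ≤ ∑ y ∈ K.steps, K.J y * (d * K.R ^ 2) :=
        sum_le_sum fun y hy => mul_le_mul_of_nonneg_left (h_sqNorm y hy) (K.nonneg y)
    _ = d * K.R ^ 2 := by rw [← sum_mul, K.sum_steps, one_mul]
    _ ≤ (d * K.R) ^ 2 := by
        rw [mul_pow]
        gcongr
        exact_mod_cast Nat.le_self_pow two_ne_zero d

theorem isSpreadOut [NeZero d] (K : AdmissibleKernel d c₀) (hc₀ : 0 ≤ c₀) :
    IsSpreadOut K.steps K.J K.R (c₀ ^ 2 / d) c₀⁻¹ where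
  scale_pos := K.R_pos
  nonneg := K.nonneg
  eq_zero y hy := not_not.1 (mt (K.mem_steps y).2 hy)
  sum_eq_one := K.sum_steps
  neg_mem y hy := by rwa [mem_steps, K.symm.comp_neg, ← mem_steps]
  map_neg := K.symm.comp_neg
  abs_le y hy i := (abs_le_supNorm y i).trans (K.supNorm_le hy)
  le_variance s := by
    have hR := K.R_pos
    have h_cov := K.symm.card_mul_sum_mul_linear_sq K.mem_steps s
    have h_sigma : (c₀ * K.R) ^ 2 ≤ K.sigma ^ 2 :=
      pow_le_pow_left₀ (by positivity) K.sigma_lower 2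
    rw [← K.sigma_sq] at h_cov
    rw [div_mul_eq_mul_div, div_mul_eq_mul_div, div_le_iff₀' (Nat.cast_pos.2 (NeZero.pos d)),
      h_cov, ← mul_pow]
    exact mul_le_mul_of_nonneg_right h_sigma (sum_nonneg fun i _ => sq_nonneg _)
  le_density y := by
    rw [Fintype.card_fin]
    exact K.J_upper y

end AdmissibleKernel

end Admissible

section KernelBounds

theorem exp_neg_sq_div_four_le (u : ℝ) : Real.exp (-(u ^ 2 / 4)) ≤ 2 * Real.exp (-(u / 2)) := by
  calc Real.exp (-(u ^ 2 / 4)) ≤ Real.exp (Real.log 2 + -(u / 2)) :=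
        Real.exp_le_exp.2 (by linarith [sq_nonneg (u - 1), Real.log_two_gt_d9])
    _ = 2 * Real.exp (-(u / 2)) := by rw [Real.exp_add, Real.exp_log two_pos]

/-- The constant in the Gaussian bound on the walk of an admissible kernel, in units of `σ_J`. -/
def walkConst (d : ℕ) (c₀ : ℝ) : ℝ := heatConst d (c₀ ^ 2 / d) c₀⁻¹ * d ^ d

theorem walkConst_pos (d : ℕ) [NeZero d] {c₀ : ℝ} (hc₀ : 0 < c₀) : 0 < walkConst d c₀ :=
  mul_pos (heatConst_pos d _ (inv_pos.2 hc₀)) (pow_pos (Nat.cast_pos.2 (NeZero.pos d)) d)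

namespace AdmissibleKernel

variable {d : ℕ} {c₀ : ℝ}

theorem one_div_max_le (K : AdmissibleKernel d c₀) (hc₀ : c₀ ∈ Set.Ioc 0 1) (x : Fin d → ℤ) :
    1 / max 1 (c₀ * supNorm x / K.sigma) ≤ K.sigma / max K.sigma (supNorm x) / c₀ := by
  have hσ := K.sigma_pos hc₀.1
  rw [div_div, div_le_div_iff₀ (by positivity) (mul_pos (by positivity) hc₀.1), one_mul,
    mul_max_of_nonneg _ _ hσ.le, max_mul_of_nonneg _ _ hc₀.1.le, mul_one, mul_div_cancel₀ _ hσ.ne',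
    mul_comm (supNorm x)]
  exact max_le_max_right _ (mul_le_of_le_one_right hσ.le hc₀.2)

variable [NeZero d]

theorem latIter_le_gaussian (K : AdmissibleKernel d c₀) (hc₀ : 0 < c₀) {m : ℕ} (hm : 1 ≤ m)
    (x : Fin d → ℤ) :
    latIter K.J m x ≤ walkConst d c₀ / K.sigma ^ d / √m ^ d *
      Real.exp (-((c₀ * supNorm x / K.sigma) ^ 2 / (4 * m))) := by
  have hR := K.R_pos
  have hσ := K.sigma_pos hc₀
  have hd : (0 : ℝ) < d := Nat.cast_pos.2 (NeZero.pos d)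
  obtain ⟨i, hi⟩ := exists_abs_eq_supNorm x
  have hX : 0 ≤ supNorm x := hi ▸ abs_nonneg _
  have h_dist : c₀ * supNorm x / K.sigma ≤ supNorm x / K.R := by
    rw [div_le_div_iff₀ hσ hR, mul_right_comm, mul_comm (supNorm x)]
    exact mul_le_mul_of_nonneg_right K.sigma_lower hX
  calc latIter K.J m x
      ≤ heatConst d (c₀ ^ 2 / d) c₀⁻¹ / (K.R * √m) ^ d * Real.exp (-((x i / K.R) ^ 2 / (4 * m))) :=
        (K.isSpreadOut hc₀.le).latIter_le_gaussian (by positivity) hm x i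
    _ = walkConst d c₀ / (d * K.R) ^ d / √m ^ d *
          Real.exp (-((supNorm x / K.R) ^ 2 / (4 * m))) := by
        rw [← hi, div_pow |(x i : ℝ)|, sq_abs, ← div_pow, walkConst, mul_pow, mul_pow]
        field_simp
    _ ≤ _ := by
        have h_walk := walkConst_pos d hc₀
        gcongr
        exact K.sigma_le

theorem latIter_le_exp (K : AdmissibleKernel d c₀) (hc₀ : 0 < c₀) {m : ℕ} (hm : 1 ≤ m)
    (x : Fin d → ℤ) :
    latIter K.J m x ≤ 2 * walkConst d c₀ / K.sigma ^ d * (1 / (m : ℝ) ^ ((d : ℝ) / 2)) *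
      Real.exp (-(c₀ / 2) * supNorm x / (K.sigma * √m)) := by
  have hσ := K.sigma_pos hc₀
  have h_walk := walkConst_pos d hc₀
  have h_sq : (c₀ * supNorm x / K.sigma) ^ 2 / (4 * m) =
      (c₀ * supNorm x / K.sigma / √m) ^ 2 / 4 := by
    rw [div_pow _ (√(m : ℝ)), Real.sq_sqrt m.cast_nonneg, div_div, mul_comm (4 : ℝ)]
  calc latIter K.J m x
      ≤ walkConst d c₀ / K.sigma ^ d / √m ^ d *
          Real.exp (-((c₀ * supNorm x / K.sigma) ^ 2 / (4 * m))) := K.latIter_le_gaussian hc₀ hm x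
    _ ≤ walkConst d c₀ / K.sigma ^ d / √m ^ d *
          (2 * Real.exp (-(c₀ * supNorm x / K.sigma / √m / 2))) := by
        rw [h_sq]
        gcongr
        exact exp_neg_sq_div_four_le _
    _ = _ := by
        rw [Real.rpow_div_two_eq_sqrt _ m.cast_nonneg, Real.rpow_natCast]
        ring_nf

theorem latGreen_le_exp (K : AdmissibleKernel d c₀) (hd : 3 ≤ d) (hc₀ : c₀ ∈ Set.Ioc 0 1) {β : ℝ}
    (hβ : β ∈ Set.Icc 0 1) (x : Fin d → ℤ) :
    latGreen K.J β x ≤ ENNReal.ofReal ((if x = 0 then 1 else 0) +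
      greenConst d * walkConst d c₀ / c₀ ^ (d - 2) / K.sigma ^ d *
        (K.sigma / max K.sigma (supNorm x)) ^ ((d : ℝ) - 2) *
          Real.exp (-(c₀ / 2) * √(1 - β) * supNorm x / K.sigma)) := by
  have hc := hc₀.1
  have hσ := K.sigma_pos hc
  have h_walk := walkConst_pos d hc
  have h_green := greenConst_pos d
  have h_rpow : (K.sigma / max K.sigma (supNorm x)) ^ ((d : ℝ) - 2) =
      (K.sigma / max K.sigma (supNorm x)) ^ (d - 2) := by
    rw [← Real.rpow_natCast, Nat.cast_sub (by omega), Nat.cast_two]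
  set t := c₀ * supNorm x / K.sigma with ht
  refine latGreen_le_of_sum_le K.nonneg hβ.1 fun N => ?_
  calc ∑ n ∈ Finset.range N, β ^ (n + 1) * latIter K.J (n + 1) x
      ≤ greenConst d * (walkConst d c₀ / K.sigma ^ d) / max 1 t ^ (d - 2) *
          Real.exp (-(√(1 - β) * t / 2)) :=
        sum_pow_mul_le_of_le_gaussian hd (by positivity) hβ
          (fun n hn => K.latIter_le_gaussian hc hn x) N
    _ = greenConst d * (walkConst d c₀ / K.sigma ^ d) * (1 / max 1 t) ^ (d - 2) *
          Real.exp (-(√(1 - β) * t / 2)) := by rw [one_div_pow, mul_one_div]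
    _ ≤ greenConst d * (walkConst d c₀ / K.sigma ^ d) *
          (K.sigma / max K.sigma (supNorm x) / c₀) ^ (d - 2) *
            Real.exp (-(√(1 - β) * t / 2)) := by
        gcongr ?_ * ?_ ^ _ * _
        exact K.one_div_max_le hc₀ x
    _ = _ := by
        rw [h_rpow, div_pow _ c₀, ht]
        ring_nf

end AdmissibleKernel

end KernelBounds

end Blackbox

/-- anti-concentration and Green function estimates for the `J`-random walk
(`Prop:Green`). -/
theorem statement7 (d : ℕ) (hd : 2 < d) (c₀ : ℝ) (hc₀ : c₀ ∈ Set.Ioc (0:ℝ) 1) :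
    ∃ c > (0:ℝ), ∃ C > (0:ℝ), ∀ K : AdmissibleKernel d c₀, ∀ β : ℝ,
      β ∈ Set.Icc (0:ℝ) 1 → ∀ m : ℕ, 1 ≤ m → ∀ x : Fin d → ℤ,
        latIter K.J m x ≤ C / K.sigma ^ d * (1 / (m:ℝ) ^ ((d:ℝ)/2)) *
          Real.exp (-c * supNorm x / (K.sigma * Real.sqrt m)) ∧
        latGreen K.J β x ≤ ENNReal.ofReal ((if x = 0 then 1 else 0) +
          C / K.sigma ^ d * (K.sigma / max K.sigma (supNorm x)) ^ ((d:ℝ) - 2) *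
            Real.exp (-c * Real.sqrt (1 - β) * supNorm x / K.sigma)) := by
  have : NeZero d := ⟨by omega⟩
  have hc := hc₀.1
  have h_walk : 0 < 2 * walkConst d c₀ := mul_pos two_pos (walkConst_pos d hc)
  have h_green : 0 < greenConst d * walkConst d c₀ / c₀ ^ (d - 2) :=
    div_pos (mul_pos (greenConst_pos d) (walkConst_pos d hc)) (pow_pos hc _)
  refine ⟨c₀ / 2, half_pos hc, 2 * walkConst d c₀ + greenConst d * walkConst d c₀ / c₀ ^ (d - 2),
    add_pos h_walk h_green, fun K β hβ m hm x => ?_⟩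
  have hσ := K.sigma_pos hc
  constructor
  · refine (K.latIter_le_exp hc hm x).trans ?_
    gcongr
    exact le_add_of_nonneg_right h_green.le
  · refine (K.latGreen_le_exp hd hc₀ hβ x).trans (ENNReal.ofReal_le_ofReal ?_)
    gcongr
    exact le_add_of_nonneg_left h_walk.le
end
end

section
/- Let d > 2 be an integer, J an admissible kernel on ℤ^d, and G ∈ 𝒢 with (J,G) satisfying Assumption G. Let 0 ≤ β' ≤ β < β_c and write Z := Z_{β',β}. Then for every integer T ≥ 1 and every x ∈ ℤ^d, G_β(x) ≤ ∑_{k=0}^{T−1} Z^k·E_{β'}[G_{β'}(x−X_k)] + Z^T·E_{β'}[G_β(x−X_T)]. If moreover Z < 1, then G_β(x) ≤ ∑_{k≥0} Z^k·E_{β'}[G_{β'}(x−X_k)]. The same two inequalities hold with G replaced by F = J*G throughout. -/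
open scoped ENNReal

noncomputable section

namespace Blackbox

/-- First coordinate (dot product with `e₁`). -/
def e1 {d : ℕ} {α : Type*} [Zero α] (y : Fin d → α) : α :=
  if h : 0 < d then y ⟨0, h⟩ else 0

/-- A family `G ∈ 𝒢` together with an admissible kernel `J` such that `(J,G)` satisfies
Assumption G (with error-term family `H`). -/
structure Model (d : ℕ) (c₀ : ℝ) where
  K : AdmissibleKernel d c₀
  G : ℝ → (Fin d → ℤ) → ℝ≥0∞
  βc : ℝ≥0∞
  βc_pos : 0 < βc
  init : ∀ x, G 0 x = if x = 0 then 1 else 0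
  G' : ℝ → (Fin d → ℤ) → ℝ
  mono : ∀ (x : Fin d → ℤ) ⦃β₁ β₂ : ℝ⦄, 0 ≤ β₁ → β₁ ≤ β₂ →
    ENNReal.ofReal β₂ ≤ βc → G β₁ x ≤ G β₂ x
  deriv : ∀ (x : Fin d → ℤ) ⦃β : ℝ⦄, 0 ≤ β → ENNReal.ofReal β < βc →
    HasDerivWithinAt (fun t => (G t x).toReal) (G' β x) (Set.Ici 0) β
  symm : ∀ β, IsSymmFun (G β)
  expDecay : ∀ ⦃β : ℝ⦄, 0 ≤ β → ENNReal.ofReal β < βc →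
    ∃ C > (0:ℝ), ∃ c > (0:ℝ), ∀ x, G β x ≤ ENNReal.ofReal (C * Real.exp (-c * supNorm x))
  limit : βc ≠ ⊤ → ∀ x, G βc.toReal x = ⨆ β ∈ Set.Ico (0 : ℝ) βc.toReal, G β x
  I1 : ∀ ⦃β' β : ℝ⦄, 0 ≤ β' → β' ≤ β → ENNReal.ofReal β < βc →
    ∀ x, G β x ≤ G β' x + ENNReal.ofReal (β - β') *
      ∑' p : (Fin d → ℤ) × (Fin d → ℤ),
        G β' p.1 * ENNReal.ofReal (K.J p.2) * G β (x - p.1 - p.2)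
  H : ℝ → (Fin d → ℤ) → ℝ
  H_nonneg : ∀ β x, 0 ≤ H β x
  H_zero : ∀ x, H 0 x = 0
  H_symm : ∀ β x, H β (-x) = H β x
  H_cont : ∀ x, ContinuousOn (fun β => H β x)
    {β : ℝ | 0 ≤ β ∧ ENNReal.ofReal β < βc}
  H_expDecay : ∀ ⦃β : ℝ⦄, 0 ≤ β → ENNReal.ofReal β < βc →
    ∃ C > (0:ℝ), ∃ c > (0:ℝ), ∀ x, H β x ≤ C * Real.exp (-c * supNorm x)
  I2 : ∀ ⦃β : ℝ⦄, 0 ≤ β → ENNReal.ofReal β < βc → ∀ x,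
    (∑' p : (Fin d → ℤ) × (Fin d → ℤ),
      (G β p.1).toReal * (K.J p.2 - H β p.2) * (G β (x - p.1 - p.2)).toReal)
      ≤ G' β x

namespace Model

variable {d : ℕ} {c₀ : ℝ}

def sigma (M : Model d c₀) : ℝ := M.K.sigma

/-- `F_β = J * G_β`. -/
def F (M : Model d c₀) (β : ℝ) (x : Fin d → ℤ) : ℝ≥0∞ :=
  ∑' y, ENNReal.ofReal (M.K.J y) * M.G β (x - y)

/-- The susceptibility `χ(β)`. -/
def chi (M : Model d c₀) (β : ℝ) : ℝ≥0∞ := ∑' x, M.G β x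

/-- `ξ(β)²`. -/
def xiSq (M : Model d c₀) (β : ℝ) : ℝ≥0∞ :=
  (∑' x, ENNReal.ofReal (sqNorm x) * M.F β x) / M.chi β

/-- The correlation length of order two, `ξ(β)`. -/
def xi (M : Model d c₀) (β : ℝ) : ℝ := Real.sqrt (M.xiSq β).toReal

/-- The error term `E(β)`. -/
def E (M : Model d c₀) (β : ℝ) : ℝ≥0∞ :=
  ⨆ t ∈ Set.Icc (0 : ℝ) β,
    (ENNReal.ofReal (∑' x, M.H t x) +
      ENNReal.ofReal (∑' x, sqNorm x * M.H t x) / M.xiSq t)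

/-- `β(δ)`. -/
def betaOf (M : Model d c₀) (δ : ℝ) : ℝ :=
  sSup {β : ℝ | 0 ≤ β ∧ ENNReal.ofReal β < M.βc ∧ M.E β < ENNReal.ofReal δ}

/-- One-step distribution of the effective random walk at parameter `β`. -/
def effStep (M : Model d c₀) (β : ℝ) (y : Fin d → ℤ) : ℝ≥0∞ :=
  M.F β y / M.chi β

/-- `k`-step distribution of the effective random walk at parameter `β`. -/
def effIter (M : Model d c₀) (β : ℝ) : ℕ → (Fin d → ℤ) → ℝ≥0∞
  | 0 => fun x => if x = 0 then 1 else 0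
  | n + 1 => fun x => ∑' y, M.effStep β y * M.effIter β n (x - y)

/-- Moment generating function `M_β(s)` of the first coordinate of one step of the
effective random walk. -/
def Mgf (M : Model d c₀) (β s : ℝ) : ℝ≥0∞ :=
  ∑' y : Fin d → ℤ, M.effStep β y * ENNReal.ofReal (Real.exp (s / M.xi β * ((e1 y : ℤ) : ℝ)))

end Model

end Blackbox
open Blackbox

/-!
Inequality (I.1) says `G_β ≤ G_β' + (β - β') • G_β' * J * G_β`, and
`(β - β') • G_β' * J = (β - β') • F_β'` is `Z` times the step distribution of the effective random
walk at `β'`. So `u = G_β` and `v = G_β'` satisfy `u ≤ v + L u` for the positive operator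
`L = Z • convolve (effStep β')`; feeding the inequality into itself gives
`u ≤ ∑_{k < T} L^k v + L^T u`, and `L^k` is `Z^k` times convolution with the law of `X_k`.
When `Z < 1` the remainder `L^T u` vanishes because `G_β` is bounded. Convolving (I.1) with `J`
gives the same starting inequality for `F`.
-/

namespace Blackbox

section Iteration

variable {R M : Type*} [Semiring R] [AddCommMonoid M] [PartialOrder M] [CanonicallyOrderedAdd M]
  [Module R M] {L : Module.End R M} {u v w : M}

lemma monotone_of_canonicallyOrderedAdd (L : Module.End R M) : Monotone L := fun a b hab ↦ by
  obtain ⟨c, rfl⟩ := exists_add_of_le hab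
  simp only [map_add, le_self_add]

lemma le_sum_pow_apply_add_pow_apply (h : u ≤ v + L u) (T : ℕ) :
    u ≤ ∑ k ∈ Finset.range T, (L ^ k) v + (L ^ T) u := by
  induction T with
  | zero => simp
  | succ T ih =>
    calc u ≤ ∑ k ∈ Finset.range T, (L ^ k) v + (L ^ T) u := ih
      _ ≤ ∑ k ∈ Finset.range T, (L ^ k) v + (L ^ T) (v + L u) := by
        gcongr
        exact monotone_of_canonicallyOrderedAdd (L ^ T) h
      _ = ∑ k ∈ Finset.range (T + 1), (L ^ k) v + (L ^ (T + 1)) u := by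
        rw [map_add, Finset.sum_range_succ, add_assoc, pow_succ, Module.End.mul_apply]

lemma le_of_hasSum_pow_apply [TopologicalSpace M] [OrderClosedTopology M] [ContinuousAdd M]
    (h : u ≤ v + L u) (hw : HasSum (fun k ↦ (L ^ k) v) w)
    (hu : Filter.Tendsto (fun T ↦ (L ^ T) u) Filter.atTop (nhds 0)) : u ≤ w :=
  add_zero w ▸ ge_of_tendsto' (hw.tendsto_sum_nat.add hu) (le_sum_pow_apply_add_pow_apply h)

end Iteration

section Convolution

variable {A : Type*} [AddCommGroup A]

/-- Convolution of `[0, ∞]`-valued functions on a discrete commutative group, bundled as a bilinear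
map so that `convolve f` is the operator of convolution by `f`. -/
def convolve : (A → ℝ≥0∞) →ₗ[ℝ≥0∞] Module.End ℝ≥0∞ (A → ℝ≥0∞) :=
  LinearMap.mk₂ ℝ≥0∞ (fun f g x ↦ ∑' y, f y * g (x - y))
    (fun f₁ f₂ g ↦ by
      ext x
      simp only [Pi.add_apply, add_mul, ENNReal.tsum_add])
    (fun c f g ↦ by
      ext x
      simp only [Pi.smul_apply, smul_eq_mul, mul_assoc, ENNReal.tsum_mul_left])
    (fun f g₁ g₂ ↦ by
      ext x
      simp only [Pi.add_apply, mul_add, ENNReal.tsum_add])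
    (fun c f g ↦ by
      ext x
      simp only [Pi.smul_apply, smul_eq_mul, mul_left_comm _ c, ENNReal.tsum_mul_left])

lemma convolve_apply (f g : A → ℝ≥0∞) (x : A) : convolve f g x = ∑' y, f y * g (x - y) := rfl

lemma convolve_comm (f g : A → ℝ≥0∞) : convolve f g = convolve g f := by
  ext x
  rw [convolve_apply, ← (Equiv.subLeft x).tsum_eq]
  exact tsum_congr fun y ↦ by rw [Equiv.subLeft_apply, sub_sub_cancel, mul_comm]

lemma convolve_convolve (f g : A → ℝ≥0∞) : convolve (convolve f g) = convolve f * convolve g := by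
  ext h x
  simp only [Module.End.mul_apply, convolve_apply, ← ENNReal.tsum_mul_left,
    ← ENNReal.tsum_mul_right]
  rw [ENNReal.tsum_comm]
  refine tsum_congr fun y ↦ ?_
  rw [← (Equiv.addRight y).tsum_eq]
  refine tsum_congr fun z ↦ ?_
  rw [Equiv.coe_addRight, add_sub_cancel_right, mul_assoc, sub_add_eq_sub_sub_swap]

lemma commute_convolve (f g : A → ℝ≥0∞) : Commute (convolve f) (convolve g) := by
  rw [Commute, SemiconjBy, ← convolve_convolve, convolve_comm f g, convolve_convolve]

lemma convolve_single_zero [DecidableEq A] :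
    convolve (Pi.single (0 : A) (1 : ℝ≥0∞)) = 1 := by
  ext g x
  rw [convolve_apply, tsum_eq_single 0 fun y hy ↦ by rw [Pi.single_eq_of_ne hy, zero_mul]]
  simp

lemma convolve_const (f : A → ℝ≥0∞) (C : ℝ≥0∞) :
    convolve f (fun _ ↦ C) = fun _ ↦ (∑' y, f y) * C :=
  funext fun _ ↦ ENNReal.tsum_mul_right

lemma tsum_convolve (f g : A → ℝ≥0∞) : ∑' x, convolve f g x = (∑' x, f x) * ∑' x, g x := by
  have h := congr_fun (DFunLike.congr_fun (convolve_convolve f g) fun _ ↦ 1) 0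
  simpa only [Module.End.mul_apply, convolve_const, mul_one] using h

lemma convolve_le_of_tsum_le_one {f g : A → ℝ≥0∞} {C : ℝ≥0∞} (hf : ∑' y, f y ≤ 1)
    (hg : g ≤ fun _ ↦ C) : convolve f g ≤ fun _ ↦ C :=
  calc convolve f g ≤ convolve f fun _ ↦ C := monotone_of_canonicallyOrderedAdd _ hg
    _ = fun _ ↦ (∑' y, f y) * C := convolve_const f C
    _ ≤ fun _ ↦ C := fun _ ↦ mul_le_of_le_one_left' hf

end Convolution

section Lattice

lemma tsum_prod_apply {ι : Type*} {n : ℕ} (f : Fin n → ι → ℝ≥0∞) :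
    ∑' x : Fin n → ι, ∏ i, f i (x i) = ∏ i, ∑' k, f i k := by
  induction n with
  | zero => simp
  | succ n ih =>
    rw [← (Fin.consEquiv fun _ : Fin (n + 1) ↦ ι).tsum_eq, ENNReal.tsum_prod']
    simp only [Fin.consEquiv, Equiv.coe_fn_mk, Fin.prod_univ_succ, Fin.cons_zero, Fin.cons_succ,
      ENNReal.tsum_mul_left, ENNReal.tsum_mul_right, ih fun i ↦ f i.succ]

lemma summable_exp_neg_mul_natAbs {a : ℝ} (ha : 0 < a) :
    Summable fun k : ℤ ↦ Real.exp (-a * k.natAbs) := by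
  have hnat : Summable fun n : ℕ ↦ Real.exp (-a * n) := by
    simpa only [mul_comm] using Real.summable_exp_nat_mul_iff.mpr (neg_neg_of_pos ha)
  exact .of_nat_of_neg (by simpa using hnat) (by simpa using hnat)

variable {d : ℕ}

lemma supNorm_nonneg (x : Fin d → ℤ) : 0 ≤ supNorm x := Nat.cast_nonneg _

lemma natAbs_apply_le_supNorm (x : Fin d → ℤ) (i : Fin d) : ((x i).natAbs : ℝ) ≤ supNorm x :=
  Nat.cast_le.mpr (Finset.le_sup (f := fun i ↦ (x i).natAbs) (Finset.mem_univ i))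

lemma sum_natAbs_le_mul_supNorm (x : Fin d → ℤ) : ∑ i, ((x i).natAbs : ℝ) ≤ d * supNorm x := by
  simpa using Finset.sum_le_card_nsmul Finset.univ _ _ fun i _ ↦ natAbs_apply_le_supNorm x i

lemma tsum_exp_neg_mul_supNorm_ne_top {c : ℝ} (hc : 0 < c) :
    ∑' x : Fin d → ℤ, ENNReal.ofReal (Real.exp (-c * supNorm x)) ≠ ⊤ := by
  -- Dividing by `d + 1` rather than `d` keeps the rate positive in dimension zero.
  set a : ℝ := c / (d + 1)
  have ha0 : 0 < a := by positivity
  have hexp (x : Fin d → ℤ) :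
      Real.exp (-c * supNorm x) ≤ ∏ i, Real.exp (-a * (x i).natAbs) := by
    have hac : a * (d + 1) = c := div_mul_cancel₀ c (by positivity)
    rw [← Real.exp_sum, Real.exp_le_exp, ← Finset.mul_sum]
    nlinarith [mul_le_mul_of_nonneg_left (sum_natAbs_le_mul_supNorm x) ha0.le,
      mul_nonneg ha0.le (supNorm_nonneg x)]
  have hprod : ∑' x : Fin d → ℤ, ∏ i, ENNReal.ofReal (Real.exp (-a * (x i).natAbs)) ≠ ⊤ := by
    rw [tsum_prod_apply fun _ k ↦ ENNReal.ofReal (Real.exp (-a * Int.natAbs k))]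
    exact ENNReal.prod_ne_top fun _ _ ↦ (summable_exp_neg_mul_natAbs ha0).tsum_ofReal_ne_top
  refine ne_top_of_le_ne_top hprod (ENNReal.tsum_le_tsum fun x ↦ ?_)
  rw [← ENNReal.ofReal_prod_of_nonneg fun _ _ ↦ (Real.exp_pos _).le]
  exact ENNReal.ofReal_le_ofReal (hexp x)

end Lattice

namespace Model

variable {d : ℕ} {c₀ : ℝ} (M : Model d c₀) {β β' : ℝ}

lemma F_eq_convolve (β : ℝ) : M.F β = convolve (fun y ↦ ENNReal.ofReal (M.K.J y)) (M.G β) := rfl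

lemma tsum_ofReal_J : ∑' y, ENNReal.ofReal (M.K.J y) = 1 := by
  rw [← ENNReal.ofReal_tsum_of_nonneg M.K.nonneg M.K.summable, M.K.norm_one, ENNReal.ofReal_one]

lemma tsum_F (β : ℝ) : ∑' x, M.F β x = M.chi β := by
  rw [F_eq_convolve, tsum_convolve, tsum_ofReal_J, one_mul, chi]

lemma chi_ne_top (h0 : 0 ≤ β) (hβ : ENNReal.ofReal β < M.βc) : M.chi β ≠ ⊤ := by
  obtain ⟨C, hC, c, hc, hG⟩ := M.expDecay h0 hβ
  refine ne_top_of_le_ne_top ?_ (ENNReal.tsum_le_tsum hG)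
  simp_rw [ENNReal.ofReal_mul hC.le, ENNReal.tsum_mul_left]
  exact ENNReal.mul_ne_top ENNReal.ofReal_ne_top (tsum_exp_neg_mul_supNorm_ne_top hc)

lemma one_le_chi (h0 : 0 ≤ β) (hβ : ENNReal.ofReal β ≤ M.βc) : 1 ≤ M.chi β :=
  calc 1 = M.G 0 0 := by rw [M.init, if_pos rfl]
    _ ≤ M.G β 0 := M.mono 0 le_rfl h0 hβ
    _ ≤ M.chi β := ENNReal.le_tsum 0

lemma exists_G_le_const (h0 : 0 ≤ β) (hβ : ENNReal.ofReal β < M.βc) :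
    ∃ C : ℝ≥0∞, C ≠ ⊤ ∧ M.G β ≤ fun _ ↦ C := by
  obtain ⟨C, hC, c, hc, hG⟩ := M.expDecay h0 hβ
  refine ⟨ENNReal.ofReal C, ENNReal.ofReal_ne_top, fun x ↦ (hG x).trans ?_⟩
  have hexp : Real.exp (-c * supNorm x) ≤ 1 :=
    Real.exp_le_one_iff.mpr (mul_nonpos_of_nonpos_of_nonneg (neg_nonpos.mpr hc.le)
      (supNorm_nonneg x))
  exact ENNReal.ofReal_le_ofReal (mul_le_of_le_one_right hC.le hexp)

lemma tsum_effStep_le_one (β : ℝ) : ∑' y, M.effStep β y ≤ 1 := by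
  simp only [effStep, div_eq_mul_inv, ENNReal.tsum_mul_right, tsum_F]
  exact ENNReal.div_self_le_one

lemma chi_smul_effStep (h0 : 0 ≤ β) (hβ : ENNReal.ofReal β < M.βc) :
    M.chi β • M.effStep β = M.F β :=
  funext fun _ ↦ ENNReal.mul_div_cancel (one_pos.trans_le (M.one_le_chi h0 hβ.le)).ne'
    (M.chi_ne_top h0 hβ)

lemma effIter_succ (β : ℝ) (k : ℕ) :
    M.effIter β (k + 1) = convolve (M.effStep β) (M.effIter β k) := rfl

lemma convolve_effIter (β : ℝ) (k : ℕ) :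
    convolve (M.effIter β k) = convolve (M.effStep β) ^ k := by
  induction k with
  | zero =>
    rw [pow_zero, ← convolve_single_zero]
    congr 1
    ext x
    simp only [effIter, Pi.single_apply]
  | succ k ih => rw [pow_succ', ← ih, ← convolve_convolve, effIter_succ]

lemma smul_convolve_effStep_pow_apply (β : ℝ) (Z : ℝ≥0∞) (k : ℕ) (g : (Fin d → ℤ) → ℝ≥0∞)
    (x : Fin d → ℤ) :
    ((Z • convolve (M.effStep β)) ^ k) g x = Z ^ k * ∑' z, M.effIter β k z * g (x - z) := by
  rw [smul_pow, ← convolve_effIter]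
  rfl

lemma tsum_effIter_le_one (β : ℝ) (k : ℕ) : ∑' x, M.effIter β k x ≤ 1 := by
  induction k with
  | zero => simp [effIter]
  | succ k ih =>
    rw [effIter_succ, tsum_convolve]
    exact mul_le_one' (M.tsum_effStep_le_one β) ih

lemma G_le_add_smul_convolve (h0 : 0 ≤ β') (hle : β' ≤ β) (hβ : ENNReal.ofReal β < M.βc) :
    M.G β ≤ M.G β' + (ENNReal.ofReal (β - β') * M.chi β') •
      convolve (M.effStep β') (M.G β) := by
  have hβ' : ENNReal.ofReal β' < M.βc := (ENNReal.ofReal_le_ofReal hle).trans_lt hβ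
  have hwalk : M.chi β' • convolve (M.effStep β') (M.G β) = convolve (M.G β') (M.F β) := by
    rw [← LinearMap.smul_apply, ← map_smul, M.chi_smul_effStep h0 hβ', F_eq_convolve,
      convolve_comm _ (M.G β'), convolve_convolve, Module.End.mul_apply, F_eq_convolve]
  intro x
  rw [mul_smul, hwalk]
  refine (M.I1 h0 hle hβ x).trans_eq ?_
  simp only [ENNReal.tsum_prod', mul_assoc, ENNReal.tsum_mul_left]
  rfl

lemma F_le_add_smul_convolve (h0 : 0 ≤ β') (hle : β' ≤ β) (hβ : ENNReal.ofReal β < M.βc) :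
    M.F β ≤ M.F β' + (ENNReal.ofReal (β - β') * M.chi β') •
      convolve (M.effStep β') (M.F β) := by
  simp only [F_eq_convolve]
  refine (monotone_of_canonicallyOrderedAdd _ (M.G_le_add_smul_convolve h0 hle hβ)).trans_eq ?_
  rw [map_add, map_smul, ← Module.End.mul_apply, (commute_convolve _ _).eq, Module.End.mul_apply]

section Iterated

variable {Z : ℝ≥0∞} {u v : (Fin d → ℤ) → ℝ≥0∞}
  (h : u ≤ v + Z • convolve (M.effStep β) u)

include h

lemma le_sum_effIter_add (T : ℕ) (x : Fin d → ℤ) :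
    u x ≤ (∑ k ∈ Finset.range T, Z ^ k * ∑' z, M.effIter β k z * v (x - z)) +
      Z ^ T * ∑' z, M.effIter β T z * u (x - z) := by
  have hT := le_sum_pow_apply_add_pow_apply (L := Z • convolve (M.effStep β)) h T x
  simpa only [Pi.add_apply, Finset.sum_apply, smul_convolve_effStep_pow_apply] using hT

lemma le_tsum_effIter {C : ℝ≥0∞} (hC : C ≠ ⊤) (hu : u ≤ fun _ ↦ C) (hZ : Z < 1) (x : Fin d → ℤ) :
    u x ≤ ∑' k : ℕ, Z ^ k * ∑' z, M.effIter β k z * v (x - z) := by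
  have hpow : Filter.Tendsto (fun T : ℕ ↦ Z ^ T * C) Filter.atTop (nhds 0) := by
    simpa using ENNReal.Tendsto.mul_const (ENNReal.tendsto_pow_atTop_nhds_zero_of_lt_one hZ)
      (Or.inr hC)
  refine le_of_hasSum_pow_apply (L := Z • convolve (M.effStep β))
    (w := fun y ↦ ∑' k : ℕ, Z ^ k * ∑' z, M.effIter β k z * v (y - z)) h
    (Pi.hasSum.mpr fun y ↦ ?_) (tendsto_pi_nhds.mpr fun y ↦ ?_) x
  · simpa only [smul_convolve_effStep_pow_apply] using ENNReal.summable.hasSum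
  · refine tendsto_of_tendsto_of_tendsto_of_le_of_le tendsto_const_nhds hpow
      (fun _ ↦ zero_le) fun T ↦ ?_
    rw [smul_convolve_effStep_pow_apply]
    gcongr
    exact convolve_le_of_tsum_le_one (M.tsum_effIter_le_one β T) hu y

end Iterated

end Model

end Blackbox

theorem statement9_general {d : ℕ} {c₀ : ℝ} (M : Model d c₀) {β' β : ℝ} (hβ'0 : 0 ≤ β')
    (hβ'β : β' ≤ β) (hβ : ENNReal.ofReal β < M.βc) :
    (∀ (T : ℕ) (x : Fin d → ℤ),
      M.G β x ≤ (∑ k ∈ Finset.range T, (ENNReal.ofReal (β - β') * M.chi β') ^ k *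
          ∑' z, M.effIter β' k z * M.G β' (x - z)) +
        (ENNReal.ofReal (β - β') * M.chi β') ^ T *
          ∑' z, M.effIter β' T z * M.G β (x - z)) ∧
    (ENNReal.ofReal (β - β') * M.chi β' < 1 → ∀ x : Fin d → ℤ,
      M.G β x ≤ ∑' k : ℕ, (ENNReal.ofReal (β - β') * M.chi β') ^ k *
          ∑' z, M.effIter β' k z * M.G β' (x - z)) ∧
    (∀ (T : ℕ) (x : Fin d → ℤ),
      M.F β x ≤ (∑ k ∈ Finset.range T, (ENNReal.ofReal (β - β') * M.chi β') ^ k *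
          ∑' z, M.effIter β' k z * M.F β' (x - z)) +
        (ENNReal.ofReal (β - β') * M.chi β') ^ T *
          ∑' z, M.effIter β' T z * M.F β (x - z)) ∧
    (ENNReal.ofReal (β - β') * M.chi β' < 1 → ∀ x : Fin d → ℤ,
      M.F β x ≤ ∑' k : ℕ, (ENNReal.ofReal (β - β') * M.chi β') ^ k *
          ∑' z, M.effIter β' k z * M.F β' (x - z)) := by
  obtain ⟨C, hC, hG⟩ := M.exists_G_le_const (hβ'0.trans hβ'β) hβ
  have hF : M.F β ≤ fun _ ↦ C := convolve_le_of_tsum_le_one M.tsum_ofReal_J.le hG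
  have hGstep := M.G_le_add_smul_convolve hβ'0 hβ'β hβ
  have hFstep := M.F_le_add_smul_convolve hβ'0 hβ'β hβ
  exact ⟨M.le_sum_effIter_add hGstep, M.le_tsum_effIter hGstep hC hG,
    M.le_sum_effIter_add hFstep, M.le_tsum_effIter hFstep hC hF⟩

/-- iterated Simon–Lieb inequalities for the effective random walk
(`lem: iterated SL`). -/
theorem statement9 (d : ℕ) (hd : 2 < d) (c₀ : ℝ) (hc₀ : c₀ ∈ Set.Ioc (0:ℝ) 1)
    (M : Model d c₀) (β' β : ℝ) (hβ'0 : 0 ≤ β') (hβ'β : β' ≤ β)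
    (hβ : ENNReal.ofReal β < M.βc) :
    (∀ T : ℕ, 1 ≤ T → ∀ x : Fin d → ℤ,
      M.G β x ≤ (∑ k ∈ Finset.range T, (ENNReal.ofReal (β - β') * M.chi β') ^ k *
          ∑' z, M.effIter β' k z * M.G β' (x - z)) +
        (ENNReal.ofReal (β - β') * M.chi β') ^ T *
          ∑' z, M.effIter β' T z * M.G β (x - z)) ∧
    (ENNReal.ofReal (β - β') * M.chi β' < 1 → ∀ x : Fin d → ℤ,
      M.G β x ≤ ∑' k : ℕ, (ENNReal.ofReal (β - β') * M.chi β') ^ k *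
          ∑' z, M.effIter β' k z * M.G β' (x - z)) ∧
    (∀ T : ℕ, 1 ≤ T → ∀ x : Fin d → ℤ,
      M.F β x ≤ (∑ k ∈ Finset.range T, (ENNReal.ofReal (β - β') * M.chi β') ^ k *
          ∑' z, M.effIter β' k z * M.F β' (x - z)) +
        (ENNReal.ofReal (β - β') * M.chi β') ^ T *
          ∑' z, M.effIter β' T z * M.F β (x - z)) ∧
    (ENNReal.ofReal (β - β') * M.chi β' < 1 → ∀ x : Fin d → ℤ,
      M.F β x ≤ ∑' k : ℕ, (ENNReal.ofReal (β - β') * M.chi β') ^ k *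
          ∑' z, M.effIter β' k z * M.F β' (x - z)) := by
  obtain ⟨hG, hGsum, hF, hFsum⟩ := statement9_general M hβ'0 hβ'β hβ
  exact ⟨fun T _ ↦ hG T, hGsum, fun T _ ↦ hF T, hFsum⟩
end
end
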